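/- There exist universal constants c > 0 and n₀ such that for all n ≥ n₀ and k with n ≤ k ≤ n²: if a randomized t-round adaptive algorithm making k exact linear measurements per round is such that for every n×n real matrix A with σ₁(A) ≥ 2·σ₂(A) it outputs a matrix B of rank at most 1 satisfying ‖A − B‖_F² ≤ (1 + 1/n)·min{‖A − X‖_F² : rank(X) ≤ 1} with probability at least 99/100 (over the seed), then t ≥ c·log(n²/k)/log log n. -/

import Mathlib

/-!
The hard input is `A = α u vᵀ + G` with `u`, `v` independent uniform sign vectors, `G` a standard
Gaussian matrix and `α = 512 / √n`. With probability at least `9/10` the noise has operator norm at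
most `16 √n` and squared Frobenius norm at most `20 n²` (`good_set`, an `ε`-net argument). On that
event `A` has the required singular value gap (`spike_gap`), and every rank-one matrix that is
`(1 + 1/n)`-optimal for `A` lies within half the squared Frobenius norm of the spike `α u vᵀ`
(`success_close`). So the algorithm has to locate the spike.

The information the algorithm gains is tracked by an unnormalised relative entropy `ent w` of a
weight `w` on the parameter `θ = (u, v)` against the uniform prior. Three facts drive the bound.

* If `k` orthonormal measurements are made while the weight is `w`, the average signal energy
  they capture is at most `κ₁ ent w + κ₂ ∑ w` with `κ₁ = 4 · 512²` and `κ₂ = O(k / n)`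
  (`query_energy`). This is the Gibbs variational inequality applied to the exponential moment of
  an order-two Rademacher chaos (`rad_chaos`, `tensor_chaos`), using that a contraction can see
  energy at most `n` in each factor.
* Since fresh measurements are orthogonal to earlier ones, the noise they see is an independent
  standard Gaussian vector (`integral_resp_peel`). Reweighting by the Gaussian likelihood raises
  the entropy by at most the captured energy, so one round multiplies the entropy coefficient by
  `1 + κ₁`; induction on the rounds gives `round_induction`.
* Any fixed output is close to the spike with prior probability at most `exp (-n / 4)`, so the
  success probability under `w` is at most `(4 / n) (ent w + ∑ w)` (`base_bound`).

Starting from the uniform weight, whose entropy vanishes, a deterministic algorithm succeeds with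
probability at most `4 / n + (2 k / n²) ((1 + κ₁) ^ t - 1)` (`deterministic_upper`). By Fubini the
same holds for randomized algorithms, while correctness forces this quantity to be at least `1/2`
(`main_ineq`). Hence `(1 + κ₁) ^ t ≥ 1 + n² / (8 k)`, that is `t ≥ c log (n² / k)`, which is even
stronger than the claim because `log log n ≥ 1`.
-/

open MeasureTheory ProbabilityTheory Matrix
open scoped ENNReal Classical

noncomputable section

/-- Squared Euclidean norm of a finitely-indexed real vector. -/
def sqNorm {ι : Type*} [Fintype ι] (x : ι → ℝ) : ℝ := ∑ i, x i ^ 2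

/-- Squared Frobenius norm of a real matrix. -/
def frobSq {m n : Type*} [Fintype m] [Fintype n] (A : Matrix m n ℝ) : ℝ :=
  ∑ i, ∑ j, A i j ^ 2

/-- Spectral (ℓ₂ operator) norm of a real matrix. -/
def specNorm {m n : Type*} [Fintype m] [Fintype n] (A : Matrix m n ℝ) : ℝ :=
  sSup ((fun x : n → ℝ => Real.sqrt (sqNorm (A.mulVec x))) '' {x | sqNorm x ≤ 1})

/-- `i`-th largest singular value (1-based), characterized via
`σ_i(A) = min {‖A − X‖ : rank X ≤ i − 1}`. -/
def singVal {m n : Type*} [Fintype m] [Fintype n] (A : Matrix m n ℝ) (i : ℕ) : ℝ :=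
  sInf {c | ∃ X : Matrix m n ℝ, X.rank ≤ i - 1 ∧ c = specNorm (A - X)}

/-- Flattening of an `n × n` matrix into a vector in `ℝ^{n²}`. -/
def vec (n : ℕ) (A : Matrix (Fin n) (Fin n) ℝ) : Fin (n * n) → ℝ :=
  fun i => A (finProdFinEquiv.symm i).1 (finProdFinEquiv.symm i).2

/-- `u ⊗ v = vec (u vᵀ) ∈ ℝ^{n²}`. -/
def tensor {n : ℕ} (u v : Fin n → ℝ) : Fin (n * n) → ℝ :=
  vec n (Matrix.of fun i j => u i * v j)

/-- Standard Gaussian measure on `ι → ℝ`. -/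
def stdGaussian (ι : Type*) [Fintype ι] : Measure (ι → ℝ) :=
  Measure.pi fun _ => gaussianReal 0 1

/-- Standard Gaussian measure on `n × n` matrices (as `Fin n → Fin n → ℝ`). -/
def stdGaussianMat (n : ℕ) : Measure (Fin n → Fin n → ℝ) :=
  Measure.pi fun _ => stdGaussian (Fin n)

/-- Query maps of a deterministic `t`-round adaptive algorithm making `k` linear
measurements per round on inputs in `ℝ^N`. -/
def QueryMaps (N k t : ℕ) : Type :=
  (j : Fin t) → (Fin (j : ℕ) → (Fin k → ℝ)) → Matrix (Fin k) (Fin N) ℝ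

namespace QueryMaps

variable {N k t : ℕ}

/-- Restriction of a round-`j` history to the first `i` rounds. -/
def prefixHist {j : Fin t} (h : Fin (j : ℕ) → Fin k → ℝ) {i : Fin t}
    (hij : (i : ℕ) < (j : ℕ)) : Fin (i : ℕ) → Fin k → ℝ :=
  fun l => h ⟨l.1, l.isLt.trans hij⟩

/-- Validity of query maps: measurability, orthonormal rows within each round, and
orthogonality across rounds along consistent histories. -/
def Valid (Q : QueryMaps N k t) : Prop :=
  (∀ (j : Fin t) (i : Fin k) (l : Fin N), Measurable fun h => Q j h i l) ∧
  (∀ (j : Fin t) (h : Fin (j : ℕ) → Fin k → ℝ), Q j h * (Q j h)ᵀ = 1) ∧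
  (∀ (j i : Fin t) (hij : (i : ℕ) < (j : ℕ)) (h : Fin (j : ℕ) → Fin k → ℝ),
      Q j h * (Q i (prefixHist h hij))ᵀ = 0)

/-- Responses of the algorithm under exact linear measurements of `a`. -/
def resp (Q : QueryMaps N k t) (a : Fin N → ℝ) (j : Fin t) : Fin k → ℝ :=
  (Q j fun i => resp Q a ⟨i.1, i.isLt.trans j.isLt⟩).mulVec a
termination_by (j : ℕ)
decreasing_by exact i.isLt

/-- Responses of the algorithm under noisy linear measurements of `a`, with fresh
per-round noise `g`. -/
def nresp (Q : QueryMaps N k t) (a : Fin N → ℝ) (g : Fin t → Fin k → ℝ) (j : Fin t) :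
    Fin k → ℝ :=
  ((Q j fun i => nresp Q a g ⟨i.1, i.isLt.trans j.isLt⟩).mulVec a) + g j
termination_by (j : ℕ)
decreasing_by exact i.isLt

/-- The `tk × N` matrix stacking all the query matrices realized along the run of the
algorithm on input `a` (exact measurements). -/
def runMat (Q : QueryMaps N k t) (a : Fin N → ℝ) : Matrix (Fin t × Fin k) (Fin N) ℝ :=
  Matrix.of fun p l =>
    Q p.1 (fun i => resp Q a ⟨i.1, i.isLt.trans p.1.isLt⟩) p.2 l

end QueryMaps

/-- Kullback–Leibler divergence, valued in `[0, ∞]`, defined with the natural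
logarithm. -/
def klDiv {Ω : Type*} [MeasurableSpace Ω] (P Q : Measure Ω) : ℝ≥0∞ :=
  if P ≪ Q ∧ Integrable (fun x => Real.log ((P.rnDeriv Q x).toReal)) P then
    ENNReal.ofReal (∫ x, Real.log ((P.rnDeriv Q x).toReal) ∂P)
  else ⊤


/-- The rank-`r` plant `Σ_{i=1}^r uᵢ vᵢᵀ` built from the rows of `U` and `V`. -/
def plant {n r : ℕ} (U V : Fin r → Fin n → ℝ) : Matrix (Fin n) (Fin n) ℝ :=
  Matrix.of fun i j => ∑ l, U l i * V l j

/-- Schatten-`p` norm (real `p`), via the singular values. -/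
def schattenNorm {n : ℕ} (p : ℝ) (A : Matrix (Fin n) (Fin n) ℝ) : ℝ :=
  (∑ i ∈ Finset.range n, singVal A (i + 1) ^ p) ^ (1 / p)

/-- Ky-Fan `p` norm: sum of the `p` largest singular values. -/
def kyFanNorm {n : ℕ} (p : ℕ) (A : Matrix (Fin n) (Fin n) ℝ) : ℝ :=
  ∑ i ∈ Finset.range p, singVal A (i + 1)

/-! ### Gaussian product measures -/

/-- Standard Gaussian measure on `ι → ℝ`. -/
abbrev gm (ι : Type*) [Fintype ι] : Measure (ι → ℝ) :=
  Measure.pi fun _ => gaussianReal 0 1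

lemma charFunDual_gm {ι : Type*} [Fintype ι] [DecidableEq ι] (L : StrongDual ℝ (ι → ℝ)) :
    charFunDual (gm ι) L =
      Complex.exp (((-(∑ i, L (Pi.single i 1) ^ 2) / 2 : ℝ) : ℂ)) := by
  rw [charFunDual_pi]
  have : ∀ i, charFunDual (gaussianReal 0 1) (L.comp (.single ℝ (fun _ : ι => ℝ) i))
      = Complex.exp (((-(L (Pi.single i 1) ^ 2) / 2 : ℝ) : ℂ)) := by
    intro i
    have h := charFun_gaussianReal (μ := 0) (v := 1) (L (Pi.single i 1))
    rw [charFun_apply_real] at h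
    rw [charFunDual_apply]
    have e : ∀ v : ℝ, (L.comp (.single ℝ (fun _ : ι => ℝ) i)) v = L (Pi.single i 1) * v := by
      intro v
      have : (Pi.single i v : ι → ℝ) = v • Pi.single i 1 := by
        rw [← Pi.single_smul]; simp
      simp [this, mul_comm]
    simp_rw [e]
    push_cast at h ⊢
    rw [h]
    congr 1
    simp
    ring
  rw [Finset.prod_congr rfl fun i _ => this i, ← Complex.exp_sum]
  congr 1
  push_cast
  rw [neg_div, Finset.sum_div, ← Finset.sum_neg_distrib]
  simp [neg_div]

/-- Peeling off one batch of orthonormal measurements: if `Q` has orthonormal rows, then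
`Qᵀ g + (1 - QᵀQ) a` is standard Gaussian for independent standard Gaussian `g`, `a`. -/
lemma gm_peel {ι κ : Type*} [Fintype ι] [Fintype κ] [DecidableEq κ]
    (Q : Matrix κ ι ℝ) (hQ : Q * Qᵀ = 1) :
    ((gm κ).prod (gm ι)).map (fun p => Qᵀ *ᵥ p.1 + (p.2 - Qᵀ *ᵥ (Q *ᵥ p.2))) = gm ι := by
  let T : ((κ → ℝ) × (ι → ℝ)) →L[ℝ] (ι → ℝ) :=
    LinearMap.toContinuousLinearMap
      { toFun := fun p => Qᵀ *ᵥ p.1 + (p.2 - Qᵀ *ᵥ (Q *ᵥ p.2))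
        map_add' := by
          intro p q
          simp only [Prod.fst_add, Prod.snd_add, Matrix.mulVec_add]
          abel
        map_smul' := by
          intro c p
          simp only [Prod.smul_fst, Prod.smul_snd, Matrix.mulVec_smul, RingHom.id_apply]
          rw [smul_add, smul_sub] }
  have hT : (fun p : (κ → ℝ) × (ι → ℝ) => Qᵀ *ᵥ p.1 + (p.2 - Qᵀ *ᵥ (Q *ᵥ p.2))) = T := rfl
  rw [hT]
  have : IsFiniteMeasure (((gm κ).prod (gm ι)).map T) :=
    Measure.isFiniteMeasure_map _ _
  apply Measure.ext_of_charFunDual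
  funext L
  rw [charFunDual_map, charFunDual_prod, charFunDual_gm, charFunDual_gm, charFunDual_gm,
    ← Complex.exp_add, ← Complex.ofReal_add]
  congr 2
  set ξ : ι → ℝ := fun i => L (Pi.single i 1) with hξ
  have hL : ∀ x, L x = ξ ⬝ᵥ x := by
    intro x
    conv_lhs => rw [← Finset.univ_sum_single x]
    rw [map_sum, dotProduct]
    refine Finset.sum_congr rfl fun i _ => ?_
    have : (Pi.single i (x i) : ι → ℝ) = x i • Pi.single i 1 := by
      rw [← Pi.single_smul]; simp
    rw [this, map_smul, smul_eq_mul, mul_comm]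
  have h1 : ∀ j, ((L.comp T).comp (.inl ℝ (κ → ℝ) (ι → ℝ))) (Pi.single j 1) = (Q *ᵥ ξ) j := by
    intro j
    have : T (Pi.single j 1, 0) = Qᵀ *ᵥ (Pi.single j 1) := by
      rw [← hT]; simp
    simp only [ContinuousLinearMap.comp_apply, ContinuousLinearMap.inl_apply, this, hL]
    rw [Matrix.dotProduct_mulVec, Matrix.vecMul_transpose]
    simp
  have h2 : ∀ i, ((L.comp T).comp (.inr ℝ (κ → ℝ) (ι → ℝ))) (Pi.single i 1)
      = (ξ - Qᵀ *ᵥ (Q *ᵥ ξ)) i := by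
    intro j
    have : T (0, Pi.single j 1) = Pi.single j 1 - Qᵀ *ᵥ (Q *ᵥ Pi.single j 1) := by
      rw [← hT]; simp
    simp only [ContinuousLinearMap.comp_apply, ContinuousLinearMap.inr_apply, this, hL]
    rw [dotProduct_sub, Matrix.dotProduct_mulVec, Matrix.vecMul_transpose,
      Matrix.dotProduct_mulVec, ← Matrix.mulVec_transpose]
    simp
  have h3 : ∀ i, L (Pi.single i 1) = ξ i := fun _ => rfl
  simp_rw [h1, h2, h3]
  have s : ∀ (x : ι → ℝ), ∑ i, x i ^ 2 = x ⬝ᵥ x := by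
    intro x; simp [dotProduct, sq]
  have s' : ∀ (x : κ → ℝ), ∑ i, x i ^ 2 = x ⬝ᵥ x := by
    intro x; simp [dotProduct, sq]
  rw [s ξ, s (ξ - _), s' (Q *ᵥ ξ)]
  have e1 : ξ ⬝ᵥ (Qᵀ *ᵥ (Q *ᵥ ξ)) = (Q *ᵥ ξ) ⬝ᵥ (Q *ᵥ ξ) := by
    rw [Matrix.dotProduct_mulVec, Matrix.vecMul_transpose]
  have e2 : (Qᵀ *ᵥ (Q *ᵥ ξ)) ⬝ᵥ (Qᵀ *ᵥ (Q *ᵥ ξ)) = (Q *ᵥ ξ) ⬝ᵥ (Q *ᵥ ξ) := by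
    rw [Matrix.dotProduct_mulVec, Matrix.vecMul_transpose, Matrix.mulVec_mulVec, hQ,
      Matrix.one_mulVec]
  rw [sub_dotProduct, dotProduct_sub, dotProduct_sub, e2, dotProduct_comm (Qᵀ *ᵥ _) ξ, e1]
  ring

lemma gaussianReal_eq_withDensity (m : ℝ) :
    gaussianReal m 1 =
      (gaussianReal 0 1).withDensity (fun x => ENNReal.ofReal (Real.exp (m * x - m ^ 2 / 2))) := by
  rw [gaussianReal_of_var_ne_zero _ one_ne_zero, gaussianReal_of_var_ne_zero _ one_ne_zero,
    ← withDensity_mul _ (measurable_gaussianPDF _ _) (by fun_prop)]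
  congr 1
  funext x
  simp only [gaussianPDF, gaussianPDFReal, Pi.mul_apply]
  rw [← ENNReal.ofReal_mul (by positivity), mul_assoc _ (Real.exp _), ← Real.exp_add]
  congr 3
  simp
  ring

/-- Likelihood ratio of the Gaussian with mean `m` against the centred one. -/
def lik {ι : Type*} [Fintype ι] (m g : ι → ℝ) : ℝ := Real.exp (m ⬝ᵥ g - m ⬝ᵥ m / 2)

lemma lik_pos {ι : Type*} [Fintype ι] (m g : ι → ℝ) : 0 < lik m g := Real.exp_pos _

lemma lik_measurable {ι : Type*} [Fintype ι] (m : ι → ℝ) : Measurable (lik m) := by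
  unfold lik dotProduct
  fun_prop

lemma lik_eq_prod {ι : Type*} [Fintype ι] (m g : ι → ℝ) :
    lik m g = ∏ i, Real.exp (m i * g i - m i ^ 2 / 2) := by
  rw [lik, ← Real.exp_sum, Finset.sum_sub_distrib, ← Finset.sum_div]
  simp [dotProduct, sq]

lemma integrable_exp_aff (m c : ℝ) :
    Integrable (fun x => Real.exp (m * x - c)) (gaussianReal 0 1) := by
  simp_rw [sub_eq_add_neg, Real.exp_add]
  exact (integrable_exp_mul_gaussianReal m).mul_const _

lemma gm_shift {ι : Type*} [Fintype ι] (m : ι → ℝ) :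
    (gm ι).map (fun g => m + g) = (gm ι).withDensity (fun g => ENNReal.ofReal (lik m g)) := by
  have h : (gm ι).map (fun g => m + g) = Measure.pi fun i => gaussianReal (m i) 1 := by
    have : ∀ i, SigmaFinite ((gaussianReal 0 1).map (fun x => m i + x)) := by
      intro i; rw [gaussianReal_map_const_add]; infer_instance
    have := Measure.pi_map_pi (μ := fun _ : ι => gaussianReal 0 1)
      (f := fun i x => m i + x) (fun i => by fun_prop)
    simp_rw [gaussianReal_map_const_add] at this
    simp only [zero_add] at this
    exact this
  rw [h]
  refine Measure.pi_eq fun s hs => ?_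
  rw [withDensity_apply _ (MeasurableSet.univ_pi hs), Measure.restrict_pi_pi]
  simp_rw [lik_eq_prod]
  have hInt : ∀ i, Integrable (fun x => Real.exp (m i * x - m i ^ 2 / 2))
      ((gaussianReal 0 1).restrict (s i)) := fun i => (integrable_exp_aff _ _).restrict
  rw [← ofReal_integral_eq_lintegral_ofReal (Integrable.fintype_prod hInt)
    (Filter.Eventually.of_forall fun x => by positivity),
    integral_fintype_prod_eq_prod (f := fun i x => Real.exp (m i * x - m i ^ 2 / 2)),
    ENNReal.ofReal_prod_of_nonneg (fun i _ => integral_nonneg fun x => by positivity)]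
  refine Finset.prod_congr rfl fun i _ => ?_
  rw [ofReal_integral_eq_lintegral_ofReal (hInt i)
    (Filter.Eventually.of_forall fun x => by positivity),
    gaussianReal_eq_withDensity (m i), withDensity_apply _ (hs i)]

/-- Cameron–Martin formula for the standard Gaussian measure. -/
lemma gm_shift_integral {ι : Type*} [Fintype ι] (m : ι → ℝ) (F : (ι → ℝ) → ℝ)
    (hF : Measurable F) :
    ∫ g, F (m + g) ∂(gm ι) = ∫ g, lik m g * F g ∂(gm ι) := by
  rw [← integral_map (φ := fun g => m + g) (by fun_prop) hF.aestronglyMeasurable, gm_shift,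
    integral_withDensity_eq_integral_toReal_smul (by have := lik_measurable m; fun_prop) (by simp)]
  refine integral_congr_ae (Filter.Eventually.of_forall fun g => ?_)
  simp [(lik_pos m g).le]

lemma gm_integrable_shift {ι : Type*} [Fintype ι] (m : ι → ℝ) (F : (ι → ℝ) → ℝ)
    (hF : Measurable F) (h : Integrable (fun g => F (m + g)) (gm ι)) :
    Integrable (fun g => lik m g * F g) (gm ι) := by
  have h1 : Integrable F ((gm ι).map (fun g => m + g)) := by
    rw [integrable_map_measure hF.aestronglyMeasurable (by fun_prop)]
    exact h
  rw [gm_shift, integrable_withDensity_iff (by have := lik_measurable m; fun_prop) (by simp)] at h1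
  refine h1.congr (Filter.Eventually.of_forall fun g => ?_)
  simp [(lik_pos m g).le, mul_comm]

/-! ### Relative entropy and the tail of an adaptive algorithm -/

/-- Unnormalised relative entropy of a positive weight `w` on a finite set against the uniform
distribution: `W · KL(w / W ‖ uniform)` with `W = ∑ w`. It is homogeneous of degree one, which
spares all normalisations of posterior distributions. -/
def ent {Θ : Type*} [Fintype Θ] (w : Θ → ℝ) : ℝ :=
  ∑ θ, w θ * Real.log (w θ) + (∑ θ, w θ) * Real.log (Fintype.card Θ)
    - (∑ θ, w θ) * Real.log (∑ θ, w θ)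

lemma ent_const_one (Θ : Type*) [Fintype Θ] : ent (fun _ : Θ => (1 : ℝ)) = 0 := by
  simp [ent]

/-- Gibbs (Donsker–Varadhan) variational inequality. -/
lemma gibbs {Θ : Type*} [Fintype Θ] [Nonempty Θ] (w f : Θ → ℝ) (hw : ∀ θ, 0 < w θ) :
    ∑ θ, w θ * f θ ≤
      ent w + (∑ θ, w θ) * Real.log ((∑ θ, Real.exp (f θ)) / Fintype.card Θ) := by
  have hW : 0 < ∑ θ, w θ := Finset.sum_pos (fun θ _ => hw θ) Finset.univ_nonempty
  have hZ : 0 < ∑ θ, Real.exp (f θ) :=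
    Finset.sum_pos (fun θ _ => Real.exp_pos _) Finset.univ_nonempty
  set W := ∑ θ, w θ with hWdef
  set Z := ∑ θ, Real.exp (f θ) with hZdef
  have hc : (0 : ℝ) < Fintype.card Θ := by exact_mod_cast Fintype.card_pos
  have key : ∀ θ, w θ * (f θ - Real.log (w θ) + Real.log W - Real.log Z)
      ≤ Real.exp (f θ) * (W / Z) - w θ := by
    intro θ
    have h := Real.log_le_sub_one_of_pos (x := Real.exp (f θ) * W / (w θ * Z))
      (by have := hw θ; positivity)
    rw [Real.log_div (by positivity) (by have := hw θ; positivity),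
      Real.log_mul (by positivity) hW.ne', Real.log_mul (hw θ).ne' hZ.ne', Real.log_exp] at h
    have h2 := mul_le_mul_of_nonneg_left h (hw θ).le
    have e : w θ * (Real.exp (f θ) * W / (w θ * Z) - 1) = Real.exp (f θ) * (W / Z) - w θ := by
      have := (hw θ).ne'
      field_simp
    rw [e] at h2
    linarith
  have hsum := Finset.sum_le_sum fun θ (_ : θ ∈ Finset.univ) => key θ
  rw [Finset.sum_sub_distrib, ← Finset.sum_mul, ← hZdef, ← hWdef, mul_div_cancel₀ _ hZ.ne',
    sub_self] at hsum
  simp only [mul_sub, mul_add, Finset.sum_sub_distrib, Finset.sum_add_distrib,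
    ← Finset.sum_mul] at hsum
  rw [← hWdef] at hsum
  rw [Real.log_div hZ.ne' hc.ne', ent, ← hWdef]
  linarith

/-- Tangent-line bound for the concave term of `ent`. -/
lemma ent_le_tangent {Θ : Type*} [Fintype Θ] [Nonempty Θ] (w : Θ → ℝ) (hw : ∀ θ, 0 < w θ)
    (V : ℝ) (hV : 0 < V) :
    ent w ≤ ∑ θ, w θ * (Real.log (w θ) + Real.log (Fintype.card Θ) - Real.log V)
      - ∑ θ, w θ + V := by
  have hW : 0 < ∑ θ, w θ := Finset.sum_pos (fun θ _ => hw θ) Finset.univ_nonempty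
  simp only [mul_sub, mul_add, Finset.sum_sub_distrib, Finset.sum_add_distrib, ← Finset.sum_mul]
  unfold ent
  set W := ∑ θ, w θ
  have h := Real.log_le_sub_one_of_pos (x := V / W) (by positivity)
  rw [Real.log_div hV.ne' hW.ne'] at h
  have h2 := mul_le_mul_of_nonneg_left h hW.le
  have e : W * (V / W - 1) = V - W := by field_simp
  rw [e] at h2
  linarith

namespace QueryMaps

variable {N k t : ℕ}

/-- The algorithm that remains after the first round has been answered by `r`. -/
def tail (Q : QueryMaps N k (t + 1)) (r : Fin k → ℝ) : QueryMaps N k t :=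
  fun j h => Q j.succ (Fin.cons (α := fun _ => Fin k → ℝ) r h)

/-- The (history independent) first query matrix. -/
def first (Q : QueryMaps N k (t + 1)) : Matrix (Fin k) (Fin N) ℝ := Q 0 (fun i => i.elim0)

lemma first_eq (Q : QueryMaps N k (t + 1)) (h : Fin ((0 : Fin (t + 1)) : ℕ) → Fin k → ℝ) :
    Q 0 h = Q.first := by
  unfold first
  congr 1
  funext i
  exact i.elim0

lemma Valid.tail {Q : QueryMaps N k (t + 1)} (hQ : Q.Valid) (r : Fin k → ℝ) :
    (Q.tail r).Valid := by
  obtain ⟨h1, h2, h3⟩ := hQ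
  refine ⟨fun j i l => ?_, fun j h => h2 _ _, fun j i hij h => ?_⟩
  · have hm : Measurable fun h : Fin (j : ℕ) → Fin k → ℝ =>
        (Fin.cons (α := fun _ => Fin k → ℝ) r h : Fin (j + 1) → Fin k → ℝ) := by
      refine measurable_pi_lambda _ fun a => ?_
      refine Fin.cases ?_ (fun b => ?_) a
      · simp
      · simpa using measurable_pi_apply b
    exact (h1 j.succ i l).comp hm
  · have h4 := h3 j.succ i.succ (by simpa using hij) (Fin.cons (α := fun _ => Fin k → ℝ) r h)
    have e : prefixHist (j := j.succ) (i := i.succ) (Fin.cons (α := fun _ => Fin k → ℝ) r h)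
        (by simpa using hij) = Fin.cons (α := fun _ => Fin k → ℝ) r (prefixHist h hij) := by
      funext a
      refine Fin.cases ?_ (fun b => ?_) a
      · rfl
      · rfl
    rw [e] at h4
    exact h4

lemma Valid.tail_first {Q : QueryMaps N k (t + 1)} (hQ : Q.Valid) (r : Fin k → ℝ) (j : Fin t)
    (h : Fin (j : ℕ) → Fin k → ℝ) : Q.tail r j h * (Q.first)ᵀ = 0 := by
  have h4 := hQ.2.2 j.succ 0 (by simp) (Fin.cons (α := fun _ => Fin k → ℝ) r h)
  exact (congrArg (fun M => Q.tail r j h * Mᵀ) (first_eq Q _)).symm.trans h4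

lemma resp_zero (Q : QueryMaps N k (t + 1)) (a : Fin N → ℝ) : resp Q a 0 = Q.first *ᵥ a := by
  rw [resp]
  exact congrArg (fun M => M *ᵥ a) (first_eq Q _)

lemma resp_succ (Q : QueryMaps N k (t + 1)) (a : Fin N → ℝ) (j : Fin t) :
    resp Q a j.succ = resp (Q.tail (resp Q a 0)) a j := by
  obtain ⟨j, hj⟩ := j
  induction j using Nat.strong_induction_on with
  | _ j ih =>
    rw [resp, resp]
    unfold tail
    congr 2
    funext i
    refine Fin.cases ?_ (fun b => ?_) i
    · rfl
    · simp only [Fin.cons_succ]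
      exact ih b b.isLt (b.isLt.trans hj)

lemma resp_eq_cons (Q : QueryMaps N k (t + 1)) (a : Fin N → ℝ) :
    resp Q a = Fin.cons (α := fun _ => Fin k → ℝ) (Q.first *ᵥ a)
      (resp (Q.tail (Q.first *ᵥ a)) a) := by
  funext j
  refine Fin.cases ?_ (fun b => ?_) j
  · rw [Fin.cons_zero, resp_zero]
  · rw [Fin.cons_succ, resp_succ, resp_zero]

lemma resp_congr (Q : QueryMaps N k t) (a b : Fin N → ℝ)
    (h : ∀ j h, Q j h *ᵥ a = Q j h *ᵥ b) : resp Q a = resp Q b := by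
  funext j
  obtain ⟨j, hj⟩ := j
  induction j using Nat.strong_induction_on with
  | _ j ih =>
    rw [resp, resp, h]
    congr 2
    funext i
    exact ih i i.isLt _

lemma measurable_resp {X : Type*} [MeasurableSpace X] (Q : X → QueryMaps N k t)
    (hQ : ∀ (j : Fin t) (i : Fin k) (l : Fin N),
      Measurable fun p : X × (Fin (j : ℕ) → Fin k → ℝ) => Q p.1 j p.2 i l)
    (a : X → Fin N → ℝ) (ha : Measurable a) :
    Measurable fun x => resp (Q x) (a x) := by
  refine measurable_pi_lambda _ fun j => ?_
  obtain ⟨j, hj⟩ := j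
  induction j using Nat.strong_induction_on with
  | _ j ih =>
    have hh : Measurable fun x => fun i : Fin j => resp (Q x) (a x) ⟨i.1, i.isLt.trans hj⟩ :=
      measurable_pi_lambda _ fun i => ih i i.isLt _
    refine measurable_pi_lambda _ fun i => ?_
    have e : (fun x => resp (Q x) (a x) ⟨j, hj⟩ i) = fun x =>
        ∑ l, Q x ⟨j, hj⟩ (fun i : Fin j => resp (Q x) (a x) ⟨i.1, i.isLt.trans hj⟩) i l * a x l := by
      funext x
      rw [resp]
      rfl
    rw [e]
    refine Finset.measurable_sum _ fun l _ => Measurable.mul ?_ ?_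
    · exact (hQ ⟨j, hj⟩ i l).comp (measurable_id.prodMk hh)
    · exact (measurable_pi_apply l).comp ha

/-- One round of the algorithm on a shifted Gaussian input: the first response is a Gaussian
vector with mean `first *ᵥ b`, and the remaining rounds behave as if they were run on a fresh
Gaussian input. -/
lemma integral_resp_peel {Q : QueryMaps N k (t + 1)} (hQ : Q.Valid) (b : Fin N → ℝ)
    (f : (Fin (t + 1) → Fin k → ℝ) → ℝ) (hf : Measurable f) (h0 : ∀ r, 0 ≤ f r)
    (h1 : ∀ r, f r ≤ 1) :
    Measurable (fun g : Fin k → ℝ => ∫ G, f (Fin.cons (α := fun _ => Fin k → ℝ) g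
        (resp (Q.tail g) (b + G))) ∂(gm (Fin N))) ∧
    ∫ G, f (resp Q (b + G)) ∂(gm (Fin N)) =
      ∫ g, (∫ G, f (Fin.cons (α := fun _ => Fin k → ℝ) (Q.first *ᵥ b + g)
        (resp (Q.tail (Q.first *ᵥ b + g)) (b + G))) ∂(gm (Fin N))) ∂(gm (Fin k)) := by
  have hcons : ∀ {X : Type} [MeasurableSpace X] (u : X → Fin k → ℝ) {s : ℕ}
      (v : X → Fin s → Fin k → ℝ), Measurable u → Measurable v →
      Measurable fun x => (Fin.cons (α := fun _ => Fin k → ℝ) (u x) (v x) :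
        Fin (s + 1) → Fin k → ℝ) := by
    intro X _ u s v hu hv
    refine measurable_pi_lambda _ fun a => ?_
    refine Fin.cases ?_ (fun c => ?_) a
    · simpa using hu
    · simp only [Fin.cons_succ]
      exact (measurable_pi_apply c).comp hv
  have htail : Measurable fun p : (Fin k → ℝ) × (Fin N → ℝ) => resp (Q.tail p.1) (b + p.2) := by
    refine measurable_resp (fun p : (Fin k → ℝ) × (Fin N → ℝ) => Q.tail p.1) (fun j i l => ?_) _
      (by fun_prop)
    exact (hQ.1 j.succ i l).comp
      (hcons (fun p : ((Fin k → ℝ) × (Fin N → ℝ)) × (Fin (j : ℕ) → Fin k → ℝ) => p.1.1)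
        (fun p => p.2) (by fun_prop) (by fun_prop))
  have hF : Measurable fun p : (Fin k → ℝ) × (Fin N → ℝ) =>
      f (Fin.cons (α := fun _ => Fin k → ℝ) p.1 (resp (Q.tail p.1) (b + p.2))) :=
    hf.comp (hcons _ _ measurable_fst htail)
  refine ⟨(hF.stronglyMeasurable.integral_prod_right (ν := gm (Fin N))).measurable, ?_⟩
  have hresp : Measurable fun G : Fin N → ℝ => f (resp Q (b + G)) :=
    hf.comp (measurable_resp (fun _ => Q) (fun j i l => (hQ.1 j i l).comp measurable_snd) _
      (by fun_prop))
  have hQ0 : Q.first * (Q.first)ᵀ = 1 := hQ.2.1 0 _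
  conv_lhs => rw [← gm_peel Q.first hQ0]
  have hTm : Measurable fun p : (Fin k → ℝ) × (Fin N → ℝ) =>
      (Q.first)ᵀ *ᵥ p.1 + (p.2 - (Q.first)ᵀ *ᵥ (Q.first *ᵥ p.2)) := by
    refine Continuous.measurable ?_
    fun_prop
  rw [integral_map hTm.aemeasurable hresp.aestronglyMeasurable]
  have e : ∀ p : (Fin k → ℝ) × (Fin N → ℝ),
      f (resp Q (b + ((Q.first)ᵀ *ᵥ p.1 + (p.2 - (Q.first)ᵀ *ᵥ (Q.first *ᵥ p.2))))) =
      f (Fin.cons (α := fun _ => Fin k → ℝ) (Q.first *ᵥ b + p.1)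
        (resp (Q.tail (Q.first *ᵥ b + p.1)) (b + p.2))) := by
    intro p
    have ef : Q.first *ᵥ (b + ((Q.first)ᵀ *ᵥ p.1 + (p.2 - (Q.first)ᵀ *ᵥ (Q.first *ᵥ p.2)))) =
        Q.first *ᵥ b + p.1 := by
      simp only [Matrix.mulVec_add, Matrix.mulVec_sub, Matrix.mulVec_mulVec, ← Matrix.mul_assoc,
        hQ0, Matrix.one_mulVec, Matrix.one_mul]
      simp
    rw [resp_eq_cons, ef]
    congr 2
    refine resp_congr _ _ _ fun j h => ?_
    have := hQ.tail_first (Q.first *ᵥ b + p.1) j h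
    simp only [Matrix.mulVec_add, Matrix.mulVec_sub, Matrix.mulVec_mulVec, ← Matrix.mul_assoc,
        this, Matrix.zero_mulVec, Matrix.zero_mul]
    simp
  simp_rw [e]
  rw [integral_prod (f := fun p : (Fin k → ℝ) × (Fin N → ℝ) =>
    f (Fin.cons (α := fun _ => Fin k → ℝ) (Q.first *ᵥ b + p.1)
        (resp (Q.tail (Q.first *ᵥ b + p.1)) (b + p.2))))]
  have hF' : Measurable fun p : (Fin k → ℝ) × (Fin N → ℝ) =>
      f (Fin.cons (α := fun _ => Fin k → ℝ) (Q.first *ᵥ b + p.1)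
        (resp (Q.tail (Q.first *ᵥ b + p.1)) (b + p.2))) :=
    hF.comp ((measurable_fst.const_add _).prodMk measurable_snd)
  exact Integrable.of_bound hF'.aestronglyMeasurable 1
    (Filter.Eventually.of_forall fun p => by
      rw [Real.norm_eq_abs, abs_of_nonneg (h0 _)]; exact h1 _)

end QueryMaps

/-! ### Information growth along the rounds -/

lemma gm_integrable_eval {ι : Type*} [Fintype ι] (i : ι) :
    Integrable (fun g : ι → ℝ => g i) (gm ι) := by
  have h : Integrable (fun x : ℝ => x) (gaussianReal 0 1) := by
    have := (memLp_id_gaussianReal (μ := 0) (v := 1) 1).integrable (by simp)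
    exact this
  exact integrable_comp_eval (μ := fun _ : ι => gaussianReal 0 1) (i := i) h

lemma gm_integral_eval {ι : Type*} [Fintype ι] (i : ι) :
    ∫ g : ι → ℝ, g i ∂(gm ι) = 0 := by
  have h := integral_comp_eval (μ := fun _ : ι => gaussianReal 0 1) (i := i) (f := fun x : ℝ => x)
    (by fun_prop)
  rw [h]
  exact integral_id_gaussianReal

lemma gm_integrable_dot {ι : Type*} [Fintype ι] (m : ι → ℝ) :
    Integrable (fun g : ι → ℝ => m ⬝ᵥ g) (gm ι) := by
  unfold dotProduct
  exact integrable_finsetSum _ fun i _ => (gm_integrable_eval i).const_mul _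

lemma gm_integral_dot {ι : Type*} [Fintype ι] (m : ι → ℝ) :
    ∫ g : ι → ℝ, m ⬝ᵥ g ∂(gm ι) = 0 := by
  unfold dotProduct
  rw [integral_finsetSum _ fun i _ => (gm_integrable_eval i).const_mul _]
  simp only [integral_const_mul, gm_integral_eval, mul_zero, Finset.sum_const_zero]

lemma gm_lik_aff {ι : Type*} [Fintype ι] (m : ι → ℝ) (A c : ℝ) :
    Integrable (fun g => lik m g * (A * (m ⬝ᵥ g) + c)) (gm ι) ∧
    ∫ g, lik m g * (A * (m ⬝ᵥ g) + c) ∂(gm ι) = A * (m ⬝ᵥ m) + c := by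
  have hm : Measurable fun g : ι → ℝ => A * (m ⬝ᵥ g) + c := by
    unfold dotProduct; fun_prop
  have hi : Integrable (fun g : ι → ℝ => A * (m ⬝ᵥ (m + g)) + c) (gm ι) := by
    simp_rw [dotProduct_add]
    exact (((integrable_const _).add (gm_integrable_dot m)).const_mul A).add (integrable_const _)
  refine ⟨gm_integrable_shift m _ hm hi, ?_⟩
  rw [← gm_shift_integral m _ hm]
  have e : ∀ g : ι → ℝ, A * (m ⬝ᵥ (m + g)) + c = (A * (m ⬝ᵥ m) + c) + A * (m ⬝ᵥ g) := by
    intro g; rw [dotProduct_add]; ring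
  simp_rw [e]
  rw [integral_add (integrable_const _) ((gm_integrable_dot m).const_mul A),
    integral_const_mul, gm_integral_dot]
  simp

/-- Growth of information along the rounds. For a finite family of inputs `a θ + G` with `G`
standard Gaussian and a weight `w` on the parameter, the weighted success of any test `f θ` of the
transcript is at most affine in the entropy of `w`. Each round passes from `w` to the
(unnormalised) posterior weights, whose expected entropy exceeds that of `w` by at most the
`w`-average of `‖M (a θ)‖² / 2`, and this is controlled by `hM`. -/
theorem round_induction {N k : ℕ} {Θ : Type*} [Fintype Θ] [Nonempty Θ] (a : Θ → Fin N → ℝ)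
    (κ₁ κ₂ A₀ B₀ : ℝ) (hκ₁ : 0 ≤ κ₁) (hA₀ : 0 ≤ A₀)
    (hM : ∀ M : Matrix (Fin k) (Fin N) ℝ, M * Mᵀ = 1 → ∀ w : Θ → ℝ, (∀ θ, 0 < w θ) →
      ∑ θ, w θ * ((M *ᵥ a θ) ⬝ᵥ (M *ᵥ a θ) / 2) ≤ κ₁ * ent w + κ₂ * ∑ θ, w θ)
    (t : ℕ) : ∀ (Q : QueryMaps N k t), Q.Valid →
    ∀ f : Θ → (Fin t → Fin k → ℝ) → ℝ, (∀ θ, Measurable (f θ)) → (∀ θ r, 0 ≤ f θ r) →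
      (∀ θ r, f θ r ≤ 1) →
      (∀ r (w : Θ → ℝ), (∀ θ, 0 < w θ) → ∑ θ, w θ * f θ r ≤ A₀ * ent w + B₀ * ∑ θ, w θ) →
    ∀ w : Θ → ℝ, (∀ θ, 0 < w θ) →
      ∑ θ, w θ * ∫ G, f θ (Q.resp (a θ + G)) ∂(gm (Fin N)) ≤
        A₀ * (1 + κ₁) ^ t * ent w
          + (B₀ + A₀ * κ₂ * ∑ i ∈ Finset.range t, (1 + κ₁) ^ i) * ∑ θ, w θ := by
  induction t with
  | zero =>
    intro Q _ f _ _ _ hb w hw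
    have h := hb (fun i => i.elim0) w hw
    have e : ∀ θ (G : Fin N → ℝ), f θ (Q.resp (a θ + G)) = f θ (fun i => i.elim0) := by
      intro θ G
      congr 1
      funext i
      exact i.elim0
    simp_rw [e]
    simpa using h
  | succ t ih =>
    intro Q hQ f hf h0 h1 hb w hw
    set A := A₀ * (1 + κ₁) ^ t with hA
    set B := B₀ + A₀ * κ₂ * ∑ i ∈ Finset.range t, (1 + κ₁) ^ i with hB
    have hApos : 0 ≤ A := by positivity
    set m : Θ → Fin k → ℝ := fun θ => Q.first *ᵥ a θ with hm
    set Φ : Θ → (Fin k → ℝ) → ℝ := fun θ g => ∫ G, f θ (Fin.cons (α := fun _ => Fin k → ℝ) g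
        ((Q.tail g).resp (a θ + G))) ∂(gm (Fin N)) with hΦ
    have hΦm : ∀ θ, Measurable (Φ θ) := fun θ =>
      (QueryMaps.integral_resp_peel hQ (a θ) (f θ) (hf θ) (h0 θ) (h1 θ)).1
    have hΦ0 : ∀ θ g, 0 ≤ Φ θ g := fun θ g => integral_nonneg fun G => h0 _ _
    have hΦ1 : ∀ θ g, Φ θ g ≤ 1 := by
      intro θ g
      have : Φ θ g ≤ ∫ _G : Fin N → ℝ, (1 : ℝ) ∂(gm (Fin N)) :=
        integral_mono_of_nonneg (Filter.Eventually.of_forall fun G => h0 _ _)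
          (integrable_const _) (Filter.Eventually.of_forall fun G => h1 _ _)
      simpa using this
    have hpeel : ∀ θ, ∫ G, f θ (Q.resp (a θ + G)) ∂(gm (Fin N))
        = ∫ g, lik (m θ) g * Φ θ g ∂(gm (Fin k)) := by
      intro θ
      rw [(QueryMaps.integral_resp_peel hQ (a θ) (f θ) (hf θ) (h0 θ) (h1 θ)).2]
      exact gm_shift_integral (m θ) (Φ θ) (hΦm θ)
    have hInt : ∀ θ, Integrable (fun g => lik (m θ) g * Φ θ g) (gm (Fin k)) := by
      intro θ
      refine gm_integrable_shift (m θ) (Φ θ) (hΦm θ) ?_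
      exact Integrable.of_bound ((hΦm θ).comp (measurable_const_add _)).aestronglyMeasurable 1
        (Filter.Eventually.of_forall fun p => by
          rw [Real.norm_eq_abs, abs_of_nonneg (hΦ0 _ _)]; exact hΦ1 _ _)
    set W := ∑ θ, w θ with hW
    have hWpos : 0 < W := Finset.sum_pos (fun θ _ => hw θ) Finset.univ_nonempty
    -- affine part of the logarithm of the posterior weight
    set c : Θ → ℝ := fun θ => Real.log (w θ) - m θ ⬝ᵥ m θ / 2
      + Real.log (Fintype.card Θ) - Real.log W with hc
    set R : (Fin k → ℝ) → ℝ := fun g =>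
      ∑ θ, w θ * (lik (m θ) g * (A * (m θ ⬝ᵥ g) + (A * c θ + B - A))) + A * W with hR
    have hpt : ∀ g, ∑ θ, w θ * (lik (m θ) g * Φ θ g) ≤ R g := by
      intro g
      have hw' : ∀ θ, 0 < w θ * lik (m θ) g := fun θ => mul_pos (hw θ) (lik_pos _ _)
      have h2 := ih (Q.tail g) (hQ.tail g)
        (fun θ r => f θ (Fin.cons (α := fun _ => Fin k → ℝ) g r)) (fun θ => by
          refine (hf θ).comp ?_
          refine measurable_pi_lambda _ fun a => ?_
          refine Fin.cases ?_ (fun b => ?_) a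
          · simp
          · simp only [Fin.cons_succ]
            exact measurable_pi_apply b)
        (fun θ r => h0 _ _) (fun θ r => h1 _ _) (fun r w hw => hb _ w hw)
        (fun θ => w θ * lik (m θ) g) hw'
      have h3 := ent_le_tangent (fun θ => w θ * lik (m θ) g) hw' W hWpos
      have h4 : ∀ θ, Real.log (w θ * lik (m θ) g)
          + Real.log (Fintype.card Θ) - Real.log W = c θ + m θ ⬝ᵥ g := by
        intro θ
        rw [Real.log_mul (hw θ).ne' (lik_pos _ _).ne', lik, Real.log_exp]
        simp only [hc]; ring
      simp_rw [h4] at h3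
      have h5 := mul_le_mul_of_nonneg_left h3 hApos
      calc ∑ θ, w θ * (lik (m θ) g * Φ θ g)
          = ∑ θ, w θ * lik (m θ) g * Φ θ g := by simp_rw [mul_assoc]
        _ ≤ A * ent (fun θ => w θ * lik (m θ) g) + B * ∑ θ, w θ * lik (m θ) g := h2
        _ ≤ A * (∑ θ, w θ * lik (m θ) g * (c θ + m θ ⬝ᵥ g) - ∑ θ, w θ * lik (m θ) g + W)
            + B * ∑ θ, w θ * lik (m θ) g := by linarith
        _ = R g := by
          have e : ∑ θ, w θ * (lik (m θ) g * (A * (m θ ⬝ᵥ g) + (A * c θ + B - A)))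
              = A * ∑ θ, w θ * lik (m θ) g * (c θ + m θ ⬝ᵥ g) - A * ∑ θ, w θ * lik (m θ) g
                + B * ∑ θ, w θ * lik (m θ) g := by
            simp only [Finset.mul_sum, ← Finset.sum_sub_distrib, ← Finset.sum_add_distrib]
            exact Finset.sum_congr rfl fun θ _ => by ring
          simp only [hR]
          rw [e]
          ring
    have hRi : ∀ θ, Integrable (fun g => w θ * (lik (m θ) g *
        (A * (m θ ⬝ᵥ g) + (A * c θ + B - A)))) (gm (Fin k)) :=
      fun θ => ((gm_lik_aff (m θ) A _).1).const_mul _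
    have hRint : ∫ g, R g ∂(gm (Fin k))
        = ∑ θ, w θ * (A * (m θ ⬝ᵥ m θ) + (A * c θ + B - A)) + A * W := by
      simp only [hR]
      rw [integral_add (integrable_finsetSum _ fun θ _ => hRi θ) (integrable_const _),
        integral_finsetSum _ fun θ _ => hRi θ]
      simp_rw [integral_const_mul, (gm_lik_aff (m _) A _).2]
      simp
    have hmain : ∑ θ, w θ * ∫ G, f θ (Q.resp (a θ + G)) ∂(gm (Fin N)) ≤ ∫ g, R g ∂(gm (Fin k)) := by
      simp_rw [hpeel, ← integral_const_mul]
      rw [← integral_finsetSum _ fun θ _ => (hInt θ).const_mul (w θ)]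
      exact integral_mono (integrable_finsetSum _ fun θ _ => (hInt θ).const_mul (w θ))
        ((integrable_finsetSum _ fun θ _ => hRi θ).add (integrable_const _)) hpt
    refine hmain.trans ?_
    rw [hRint]
    have hent : ∑ θ, w θ * (A * (m θ ⬝ᵥ m θ) + (A * c θ + B - A)) + A * W
        = A * (ent w + ∑ θ, w θ * (m θ ⬝ᵥ m θ / 2)) + B * W := by
      have e : ∀ θ, w θ * (A * (m θ ⬝ᵥ m θ) + (A * c θ + B - A))
          = A * (w θ * Real.log (w θ)) + A * (w θ * (m θ ⬝ᵥ m θ / 2))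
            + w θ * (A * Real.log (Fintype.card Θ) - A * Real.log W + B - A) := by
        intro θ; simp only [hc]; ring
      simp_rw [e]
      rw [Finset.sum_add_distrib, Finset.sum_add_distrib, ← Finset.mul_sum, ← Finset.mul_sum,
        ← Finset.sum_mul, ← hW, ent, ← hW]
      ring
    rw [hent]
    have h6 := mul_le_mul_of_nonneg_left (hM Q.first (hQ.2.1 0 _) w hw) hApos
    rw [Finset.sum_range_succ, pow_succ]
    have e7 : A₀ * ((1 + κ₁) ^ t * (1 + κ₁)) * ent w = A * ent w + A * (κ₁ * ent w) := by
      rw [hA]; ring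
    have e8 : (B₀ + A₀ * κ₂ * (∑ i ∈ Finset.range t, (1 + κ₁) ^ i + (1 + κ₁) ^ t)) * W
        = B * W + A * (κ₂ * W) := by
      rw [hA, hB]; ring
    rw [e7, e8]
    rw [mul_add] at h6 ⊢
    linarith

/-! ### Exponential moments of sign vectors -/

lemma integral_exp_sq_gaussian {c : ℝ} (hc0 : 0 ≤ c) (hc : c ≤ 1 / 4) :
    Integrable (fun x => Real.exp (c * x ^ 2)) (gaussianReal 0 1) ∧
    ∫ x, Real.exp (c * x ^ 2) ∂(gaussianReal 0 1) ≤ Real.exp (2 * c) := by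
  have hb : 0 < 1 / 2 - c := by linarith
  have e : ∀ x : ℝ, gaussianPDFReal 0 1 x * Real.exp (c * x ^ 2)
      = (√(2 * Real.pi))⁻¹ * Real.exp (-(1 / 2 - c) * x ^ 2) := by
    intro x
    rw [gaussianPDFReal, mul_assoc, ← Real.exp_add]
    simp only [NNReal.coe_one, mul_one, sub_zero]
    congr 2
    ring
  constructor
  · rw [gaussianReal_of_var_ne_zero _ one_ne_zero,
      integrable_withDensity_iff (measurable_gaussianPDF _ _) (by simp [gaussianPDF])]
    have := (integrable_exp_neg_mul_sq hb).const_mul (√(2 * Real.pi))⁻¹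
    refine this.congr (Filter.Eventually.of_forall fun x => ?_)
    simp only [toReal_gaussianPDF]
    rw [mul_comm (Real.exp _), e]
  · rw [integral_gaussianReal_eq_integral_smul one_ne_zero]
    simp_rw [smul_eq_mul, e]
    rw [integral_const_mul, integral_gaussian, ← Real.sqrt_inv, ← Real.sqrt_mul (by positivity)]
    rw [Real.sqrt_le_left (Real.exp_pos _).le, ← Real.exp_nat_mul]
    have e2 : (2 * Real.pi)⁻¹ * (Real.pi / (1 / 2 - c)) = 1 / (1 - 2 * c) := by
      have := Real.pi_pos.ne'
      have h3 : 1 - 2 * c ≠ 0 := by linarith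
      field_simp
    rw [e2, div_le_iff₀ (by linarith)]
    have h4 := Real.add_one_le_exp (((2 : ℕ) : ℝ) * (2 * c))
    push_cast at h4 ⊢
    nlinarith

/-- The sign vector in `{±1}ⁿ` coded by a Boolean vector. -/
def sv {n : ℕ} (b : Fin n → Bool) : Fin n → ℝ := fun i => if b i then 1 else -1

lemma sv_sq {n : ℕ} (b : Fin n → Bool) (i : Fin n) : sv b i ^ 2 = 1 := by
  unfold sv; split <;> norm_num

lemma sv_dot {n : ℕ} (b : Fin n → Bool) : sv b ⬝ᵥ sv b = n := by
  simp [dotProduct, ← sq, sv_sq]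

/-- Sign vectors are sub-Gaussian. -/
lemma rad_mgf {n : ℕ} (x : Fin n → ℝ) :
    ∑ b : Fin n → Bool, Real.exp (x ⬝ᵥ sv b) ≤ 2 ^ n * Real.exp (x ⬝ᵥ x / 2) := by
  have h : ∑ b : Fin n → Bool, Real.exp (x ⬝ᵥ sv b)
      = ∏ i, ∑ c : Bool, Real.exp (x i * (if c then 1 else -1)) := by
    rw [Finset.prod_univ_sum]
    simp only [Fintype.piFinset_univ]
    refine Finset.sum_congr rfl fun b _ => ?_
    rw [dotProduct, Real.exp_sum]
    rfl
  rw [h]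
  have h2 : ∀ i ∈ Finset.univ, ∑ c : Bool, Real.exp (x i * (if c then 1 else -1))
      ≤ 2 * Real.exp (x i ^ 2 / 2) := by
    intro i _
    have := Real.cosh_le_exp_half_sq (x i)
    rw [Real.cosh_eq] at this
    simp only [Fintype.sum_bool, if_true, mul_one]
    simp
    linarith
  refine (Finset.prod_le_prod (fun i _ => by positivity) h2).trans_eq ?_
  rw [Finset.prod_mul_distrib, ← Real.exp_sum, ← Finset.sum_div]
  simp [dotProduct, sq]

/-- Exponential moment of a Rademacher chaos of order two. The quadratic form is diagonalised and
linearised by a Gaussian vector, which decouples the signs. -/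
lemma rad_chaos {ι : Type*} [Fintype ι] {n : ℕ} (M : Matrix ι (Fin n) ℝ) (s l : ℝ)
    (hl : 0 ≤ l) (hls : l * s ≤ 1 / 4)
    (hs : ∀ v : Fin n → ℝ, (M *ᵥ v) ⬝ᵥ (M *ᵥ v) ≤ s * (v ⬝ᵥ v)) :
    ∑ b : Fin n → Bool, Real.exp (l * ((M *ᵥ sv b) ⬝ᵥ (M *ᵥ sv b)))
      ≤ 2 ^ n * Real.exp (2 * l * ∑ i, ∑ j, M i j ^ 2) := by
  have hS : (Mᵀ * M).IsHermitian := by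
    have := Matrix.isHermitian_conjTranspose_mul_self M
    rwa [Matrix.conjTranspose_eq_transpose_of_trivial] at this
  set d := hS.eigenvalues with hd
  set U : Matrix (Fin n) (Fin n) ℝ := (hS.eigenvectorUnitary : Matrix (Fin n) (Fin n) ℝ) with hU
  have hUU : Uᵀ * U = 1 := by
    have := Matrix.UnitaryGroup.star_mul_self hS.eigenvectorUnitary
    rwa [Matrix.star_eq_conjTranspose, Matrix.conjTranspose_eq_transpose_of_trivial] at this
  have hUU' : U * Uᵀ = 1 := mul_eq_one_comm.mp hUU
  have hspec : Mᵀ * M = U * Matrix.diagonal d * Uᵀ := by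
    have h := hS.spectral_theorem
    rw [Unitary.conjStarAlgAut_apply] at h
    rw [h, Matrix.star_eq_conjTranspose, Matrix.conjTranspose_eq_transpose_of_trivial]
    rfl
  have hquad : ∀ v : Fin n → ℝ, (M *ᵥ v) ⬝ᵥ (M *ᵥ v) = ∑ i, d i * (Uᵀ *ᵥ v) i ^ 2 := by
    intro v
    have h1 : (M *ᵥ v) ⬝ᵥ (M *ᵥ v) = v ⬝ᵥ ((Mᵀ * M) *ᵥ v) := by
      rw [← Matrix.mulVec_mulVec, Matrix.dotProduct_mulVec v, Matrix.vecMul_transpose]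
    rw [h1, hspec, ← Matrix.mulVec_mulVec, ← Matrix.mulVec_mulVec, Matrix.dotProduct_mulVec,
      ← Matrix.mulVec_transpose, dotProduct]
    refine Finset.sum_congr rfl fun i _ => ?_
    rw [Matrix.mulVec_diagonal]
    ring
  have hnorm : ∀ y : Fin n → ℝ, (U *ᵥ y) ⬝ᵥ (U *ᵥ y) = y ⬝ᵥ y := by
    intro y
    rw [Matrix.dotProduct_mulVec, ← Matrix.mulVec_transpose, Matrix.mulVec_mulVec, hUU,
      Matrix.one_mulVec]
  have hev : ∀ i, d i = (M *ᵥ (U *ᵥ Pi.single i 1)) ⬝ᵥ (M *ᵥ (U *ᵥ Pi.single i 1)) := by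
    intro i
    rw [hquad, Matrix.mulVec_mulVec, hUU, Matrix.one_mulVec, Finset.sum_eq_single i]
    · simp
    · intro j _ hj; simp [hj]
    · simp
  have hd0 : ∀ i, 0 ≤ d i := by
    intro i; rw [hev]; exact Finset.sum_nonneg fun j _ => mul_self_nonneg _
  have hds : ∀ i, d i ≤ s := by
    intro i
    have := hs (U *ᵥ Pi.single i 1)
    rw [← hev, hnorm] at this
    simpa using this
  have hc : ∀ i, l * d i ≤ 1 / 4 := fun i =>
    (mul_le_mul_of_nonneg_left (hds i) hl).trans hls
  have htr : ∑ i, d i = ∑ i, ∑ j, M i j ^ 2 := by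
    have h1 : (Mᵀ * M).trace = ∑ i, d i := by
      rw [hspec, Matrix.trace_mul_comm, ← Matrix.mul_assoc, hUU, Matrix.one_mul,
        Matrix.trace_diagonal]
    rw [← h1, Matrix.trace, Finset.sum_comm]
    simp [Matrix.mul_apply, sq]
  set z : (Fin n → ℝ) → (Fin n → ℝ) := fun g => U *ᵥ (fun i => √(2 * l * d i) * g i) with hz
  have hlin : ∀ v g, z g ⬝ᵥ v = ∑ i, (√(2 * l * d i) * (Uᵀ *ᵥ v) i) * g i := by
    intro v g
    rw [dotProduct_comm, hz]
    simp only
    rw [Matrix.dotProduct_mulVec, ← Matrix.mulVec_transpose, dotProduct]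
    exact Finset.sum_congr rfl fun i _ => by ring
  have hzz : ∀ g, z g ⬝ᵥ z g / 2 = ∑ i, (l * d i) * g i ^ 2 := by
    intro g
    rw [hz]
    simp only
    rw [hnorm, dotProduct, Finset.sum_div]
    refine Finset.sum_congr rfl fun i _ => ?_
    have := Real.sq_sqrt (show 0 ≤ 2 * l * d i from by have := hd0 i; positivity)
    have e : √(2 * l * d i) * g i * (√(2 * l * d i) * g i) / 2
      = √(2 * l * d i) ^ 2 * g i ^ 2 / 2 := by ring
    rw [e, this]
    ring
  have hmgf : ∀ v, Integrable (fun g => Real.exp (z g ⬝ᵥ v)) (gm (Fin n)) ∧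
      ∫ g, Real.exp (z g ⬝ᵥ v) ∂(gm (Fin n)) = Real.exp (l * ((M *ᵥ v) ⬝ᵥ (M *ᵥ v))) := by
    intro v
    simp_rw [hlin, Real.exp_sum]
    refine ⟨Integrable.fintype_prod fun i => integrable_exp_mul_gaussianReal _, ?_⟩
    rw [integral_fintype_prod_eq_prod
      (f := fun i x => Real.exp ((√(2 * l * d i) * (Uᵀ *ᵥ v) i) * x))]
    have : ∀ i, ∫ x, Real.exp ((√(2 * l * d i) * (Uᵀ *ᵥ v) i) * x) ∂(gaussianReal 0 1)
        = Real.exp (l * d i * (Uᵀ *ᵥ v) i ^ 2) := by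
      intro i
      have h := congrFun (mgf_id_gaussianReal (μ := 0) (v := 1)) (√(2 * l * d i) * (Uᵀ *ᵥ v) i)
      simp only [mgf, id] at h
      rw [h]
      congr 1
      rw [mul_pow, Real.sq_sqrt (show 0 ≤ 2 * l * d i from by have := hd0 i; positivity)]
      simp
      ring
    rw [Finset.prod_congr rfl fun i _ => this i, ← Real.exp_sum, hquad, Finset.mul_sum]
    congr 1
    exact Finset.sum_congr rfl fun i _ => by ring
  have hsq : Integrable (fun g => Real.exp (z g ⬝ᵥ z g / 2)) (gm (Fin n)) ∧
      ∫ g, Real.exp (z g ⬝ᵥ z g / 2) ∂(gm (Fin n)) ≤ Real.exp (2 * l * ∑ i, d i) := by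
    simp_rw [hzz, Real.exp_sum]
    refine ⟨Integrable.fintype_prod (f := fun i x => Real.exp (l * d i * x ^ 2)) fun i =>
      (integral_exp_sq_gaussian (mul_nonneg hl (hd0 i)) (hc i)).1, ?_⟩
    rw [integral_fintype_prod_eq_prod (f := fun i x => Real.exp (l * d i * x ^ 2)),
      Finset.mul_sum, Real.exp_sum]
    refine Finset.prod_le_prod (fun i _ => integral_nonneg fun x => (Real.exp_pos _).le)
      fun i _ => ?_
    have := (integral_exp_sq_gaussian (mul_nonneg hl (hd0 i)) (hc i)).2
    rwa [← mul_assoc] at this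
  calc ∑ b : Fin n → Bool, Real.exp (l * ((M *ᵥ sv b) ⬝ᵥ (M *ᵥ sv b)))
      = ∫ g, ∑ b : Fin n → Bool, Real.exp (z g ⬝ᵥ sv b) ∂(gm (Fin n)) := by
        rw [integral_finsetSum _ fun b _ => (hmgf _).1]
        exact Finset.sum_congr rfl fun b _ => ((hmgf _).2).symm
    _ ≤ ∫ g, 2 ^ n * Real.exp (z g ⬝ᵥ z g / 2) ∂(gm (Fin n)) :=
        integral_mono (integrable_finsetSum _ fun b _ => (hmgf _).1) (hsq.1.const_mul _)
          fun g => rad_mgf _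
    _ ≤ _ := by
        rw [integral_const_mul, ← htr]
        exact mul_le_mul_of_nonneg_left hsq.2 (by positivity)

/-! ### Energy captured by one round of queries -/

lemma mulVec_contract {k N : ℕ} (M : Matrix (Fin k) (Fin N) ℝ) (hM : M * Mᵀ = 1)
    (x : Fin N → ℝ) : (M *ᵥ x) ⬝ᵥ (M *ᵥ x) ≤ x ⬝ᵥ x := by
  set y := M *ᵥ x with hy
  have h0 : 0 ≤ (x - Mᵀ *ᵥ y) ⬝ᵥ (x - Mᵀ *ᵥ y) :=
    Finset.sum_nonneg fun j _ => mul_self_nonneg _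
  have h1 : x ⬝ᵥ (Mᵀ *ᵥ y) = y ⬝ᵥ y := by
    rw [Matrix.dotProduct_mulVec, Matrix.vecMul_transpose]
  have h2 : (Mᵀ *ᵥ y) ⬝ᵥ (Mᵀ *ᵥ y) = y ⬝ᵥ y := by
    rw [Matrix.dotProduct_mulVec, Matrix.vecMul_transpose, Matrix.mulVec_mulVec, hM,
      Matrix.one_mulVec]
  rw [sub_dotProduct, dotProduct_sub, dotProduct_sub, h2, dotProduct_comm (Mᵀ *ᵥ y) x, h1] at h0
  linarith

lemma tensor_apply {n : ℕ} (u v : Fin n → ℝ) (a b : Fin n) :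
    tensor u v (finProdFinEquiv (a, b)) = u a * v b := by
  simp [tensor, _root_.vec]

lemma sum_fin_mul {n : ℕ} (f : Fin (n * n) → ℝ) :
    ∑ i, f i = ∑ a : Fin n, ∑ b : Fin n, f (finProdFinEquiv (a, b)) := by
  rw [← Equiv.sum_comp finProdFinEquiv f, Fintype.sum_prod_type]

lemma tensor_dot {n : ℕ} (u v : Fin n → ℝ) :
    tensor u v ⬝ᵥ tensor u v = (u ⬝ᵥ u) * (v ⬝ᵥ v) := by
  rw [dotProduct, sum_fin_mul]
  simp only [tensor_apply, dotProduct]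
  rw [Finset.sum_mul_sum]
  exact Finset.sum_congr rfl fun a _ => Finset.sum_congr rfl fun b _ => by ring

lemma dot_self_eq {ι : Type*} [Fintype ι] (x : ι → ℝ) : x ⬝ᵥ x = ∑ i, x i ^ 2 :=
  Finset.sum_congr rfl fun i _ => by ring

/-- Exponential moment of the energy captured by `k` orthonormal measurements of a random sign
tensor: the order-two chaos bound is applied in `v` for fixed `u`, then in `u`. -/
lemma tensor_chaos {n k : ℕ} (hn : 0 < n) (M : Matrix (Fin k) (Fin (n * n)) ℝ)
    (hM : M * Mᵀ = 1) :
    ∑ θ : (Fin n → Bool) × (Fin n → Bool), Real.exp (1 / (8 * n : ℝ) *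
      ((M *ᵥ tensor (sv θ.1) (sv θ.2)) ⬝ᵥ (M *ᵥ tensor (sv θ.1) (sv θ.2))))
      ≤ 2 ^ n * 2 ^ n * Real.exp (k / (2 * n : ℝ)) := by
  have hn' : (0 : ℝ) < n := by exact_mod_cast hn
  let Mu : (Fin n → ℝ) → Matrix (Fin k) (Fin n) ℝ :=
    fun u => Matrix.of fun i b => ∑ a, M i (finProdFinEquiv (a, b)) * u a
  let N : Matrix (Fin k × Fin n) (Fin n) ℝ :=
    Matrix.of fun p a => M p.1 (finProdFinEquiv (a, p.2))
  have e1 : ∀ u v, M *ᵥ tensor u v = Mu u *ᵥ v := by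
    intro u v
    ext i
    simp only [Matrix.mulVec, dotProduct, Mu, Matrix.of_apply]
    rw [sum_fin_mul, Finset.sum_comm]
    refine Finset.sum_congr rfl fun b _ => ?_
    rw [Finset.sum_mul]
    exact Finset.sum_congr rfl fun a _ => by rw [tensor_apply]; ring
  have e2 : ∀ u, ∑ i, ∑ b, Mu u i b ^ 2 = (N *ᵥ u) ⬝ᵥ (N *ᵥ u) := by
    intro u
    rw [dot_self_eq, Fintype.sum_prod_type]
    rfl
  have b1 : ∀ u v, (Mu u *ᵥ v) ⬝ᵥ (Mu u *ᵥ v) ≤ (u ⬝ᵥ u) * (v ⬝ᵥ v) := by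
    intro u v
    rw [← e1, ← tensor_dot]
    exact mulVec_contract M hM _
  have b2 : ∀ u, (N *ᵥ u) ⬝ᵥ (N *ᵥ u) ≤ n * (u ⬝ᵥ u) := by
    intro u
    rw [← e2, Finset.sum_comm]
    have : ∀ b ∈ Finset.univ, ∑ i, Mu u i b ^ 2 ≤ u ⬝ᵥ u := by
      intro b _
      have h := b1 u (Pi.single b 1)
      rw [dot_self_eq] at h
      simpa using h
    exact (Finset.sum_le_sum this).trans (by simp)
  have b3 : ∑ p, ∑ a, N p a ^ 2 = k := by
    have h : (M * Mᵀ).trace = k := by rw [hM]; simp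
    rw [← h, Matrix.trace, Fintype.sum_prod_type]
    refine Finset.sum_congr rfl fun i _ => ?_
    simp only [Matrix.diag, Matrix.mul_apply, Matrix.transpose_apply]
    rw [sum_fin_mul, Finset.sum_comm]
    exact Finset.sum_congr rfl fun a _ => Finset.sum_congr rfl fun b _ => by
      simp only [N, Matrix.of_apply]; ring
  rw [Fintype.sum_prod_type]
  have s1 : ∀ b₁ : Fin n → Bool, ∑ b₂ : Fin n → Bool, Real.exp (1 / (8 * n : ℝ) *
      ((M *ᵥ tensor (sv b₁) (sv b₂)) ⬝ᵥ (M *ᵥ tensor (sv b₁) (sv b₂))))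
      ≤ 2 ^ n * Real.exp (1 / (4 * n : ℝ) * ((N *ᵥ sv b₁) ⬝ᵥ (N *ᵥ sv b₁))) := by
    intro b₁
    have h := rad_chaos (Mu (sv b₁)) n (1 / (8 * n : ℝ)) (by positivity)
      (by field_simp; norm_num) (fun v => by rw [← sv_dot b₁]; exact b1 _ v)
    rw [e2] at h
    simp_rw [e1]
    refine h.trans_eq ?_
    congr 2
    field_simp
    ring
  have s2 := rad_chaos N n (1 / (4 * n : ℝ)) (by positivity) (by field_simp; norm_num) b2
  rw [b3] at s2
  refine (Finset.sum_le_sum fun b₁ _ => s1 b₁).trans ?_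
  rw [← Finset.mul_sum, mul_assoc]
  refine mul_le_mul_of_nonneg_left (s2.trans_eq ?_) (by positivity)
  congr 2
  field_simp
  norm_num

/-- Entropic form of `tensor_chaos`: under any weight `w`, the energy captured by one round is
controlled by the relative entropy of `w`. -/
lemma query_energy {n k : ℕ} (hn : 0 < n) (M : Matrix (Fin k) (Fin (n * n)) ℝ)
    (hM : M * Mᵀ = 1) (α : ℝ) (w : (Fin n → Bool) × (Fin n → Bool) → ℝ) (hw : ∀ θ, 0 < w θ) :
    ∑ θ, w θ * ((M *ᵥ (α • tensor (sv θ.1) (sv θ.2))) ⬝ᵥ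
        (M *ᵥ (α • tensor (sv θ.1) (sv θ.2))) / 2)
      ≤ (4 * α ^ 2 * n) * ent w + (2 * α ^ 2 * k) * ∑ θ, w θ := by
  have hn' : (0 : ℝ) < n := by exact_mod_cast hn
  have g := gibbs w (fun θ => 1 / (8 * n : ℝ) *
      ((M *ᵥ tensor (sv θ.1) (sv θ.2)) ⬝ᵥ (M *ᵥ tensor (sv θ.1) (sv θ.2)))) hw
  have hc : ((Fintype.card ((Fin n → Bool) × (Fin n → Bool)) : ℕ) : ℝ) = 2 ^ n * 2 ^ n := by
    simp
  rw [hc] at g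
  set Z := ∑ θ : (Fin n → Bool) × (Fin n → Bool), Real.exp (1 / (8 * n : ℝ) *
      ((M *ᵥ tensor (sv θ.1) (sv θ.2)) ⬝ᵥ (M *ᵥ tensor (sv θ.1) (sv θ.2)))) with hZ
  have hZ0 : 0 < Z := Finset.sum_pos (fun θ _ => Real.exp_pos _) Finset.univ_nonempty
  have hW : 0 ≤ ∑ θ, w θ := Finset.sum_nonneg fun θ _ => (hw θ).le
  have hl : Real.log (Z / (2 ^ n * 2 ^ n)) ≤ k / (2 * n : ℝ) := by
    rw [Real.log_le_iff_le_exp (by positivity), div_le_iff₀ (by positivity), mul_comm]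
    exact tensor_chaos hn M hM
  have g2 := g.trans (add_le_add_right (mul_le_mul_of_nonneg_left hl hW) (ent w))
  have e : ∑ θ, w θ * ((M *ᵥ (α • tensor (sv θ.1) (sv θ.2))) ⬝ᵥ
        (M *ᵥ (α • tensor (sv θ.1) (sv θ.2))) / 2)
      = (4 * α ^ 2 * n) * ∑ θ, w θ * (1 / (8 * n : ℝ) *
      ((M *ᵥ tensor (sv θ.1) (sv θ.2)) ⬝ᵥ (M *ᵥ tensor (sv θ.1) (sv θ.2)))) := by
    rw [Finset.mul_sum]
    refine Finset.sum_congr rfl fun θ _ => ?_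
    rw [Matrix.mulVec_smul, smul_dotProduct, dotProduct_smul]
    simp only [smul_eq_mul]
    field_simp
    ring
  rw [e]
  refine (mul_le_mul_of_nonneg_left g2 (by positivity)).trans_eq ?_
  field_simp
  ring

/-! ### Success probability of a fixed output -/

/-- The planted rank-one matrix `α u vᵀ` with sign vectors `u`, `v` coded by `θ`. -/
def spike {n : ℕ} (α : ℝ) (θ : (Fin n → Bool) × (Fin n → Bool)) : Matrix (Fin n) (Fin n) ℝ :=
  Matrix.of fun i j => α * (sv θ.1 i * sv θ.2 j)

lemma vec_spike {n : ℕ} (α : ℝ) (θ : (Fin n → Bool) × (Fin n → Bool)) :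
    _root_.vec n (spike α θ) = α • tensor (sv θ.1) (sv θ.2) := by
  ext i
  simp [_root_.vec, spike, tensor]

/-- Closeness of `B` to the spike correlates `B` with `u vᵀ` so strongly that the event has prior
probability at most `exp (-n / 4)`; this is the exponential-moment form of that fact. -/
lemma base_indicator {n : ℕ} (hn : 0 < n) (α : ℝ) (hα : 0 < α) (B : Matrix (Fin n) (Fin n) ℝ)
    (θ : (Fin n → Bool) × (Fin n → Bool)) :
    Real.exp (n / 4 * (if frobSq (B - spike α θ) ≤ α ^ 2 * n ^ 2 / 2 then (1 : ℝ) else 0))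
      ≤ 1 + Real.exp (-(frobSq B / (2 * α ^ 2 * n))) *
        Real.exp (((1 / (α * n)) • (Bᵀ *ᵥ sv θ.1)) ⬝ᵥ sv θ.2) := by
  have hn' : (0 : ℝ) < n := by exact_mod_cast hn
  split_ifs with h
  · have hcr : ((Bᵀ *ᵥ sv θ.1) ⬝ᵥ sv θ.2) = ∑ i, ∑ j, B i j * (sv θ.1 i * sv θ.2 j) := by
      simp only [dotProduct, Matrix.mulVec, Matrix.transpose_apply]
      rw [Finset.sum_comm]
      refine Finset.sum_congr rfl fun j _ => ?_
      rw [Finset.sum_mul]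
      exact Finset.sum_congr rfl fun i _ => by ring
    have hex : frobSq (B - spike α θ) =
        frobSq B - 2 * α * ((Bᵀ *ᵥ sv θ.1) ⬝ᵥ sv θ.2) + α ^ 2 * n ^ 2 := by
      have h1 : ∀ i j, (B - spike α θ) i j ^ 2
          = B i j ^ 2 - 2 * α * (B i j * (sv θ.1 i * sv θ.2 j)) + α ^ 2 := by
        intro i j
        have a := sv_sq θ.1 i
        have b := sv_sq θ.2 j
        simp only [spike, Matrix.sub_apply, Matrix.of_apply]
        have : (B i j - α * (sv θ.1 i * sv θ.2 j)) ^ 2 = B i j ^ 2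
          - 2 * α * (B i j * (sv θ.1 i * sv θ.2 j)) + α ^ 2 * (sv θ.1 i ^ 2 * sv θ.2 j ^ 2) := by
          ring
        rw [this, a, b]; ring
      rw [hcr]
      simp only [frobSq, h1, Finset.sum_add_distrib, Finset.sum_sub_distrib, ← Finset.mul_sum]
      simp
      ring
    rw [hex] at h
    rw [← Real.exp_add]
    have : (n : ℝ) / 4 * 1 ≤ -(frobSq B / (2 * α ^ 2 * n)) +
        ((1 / (α * n)) • (Bᵀ *ᵥ sv θ.1)) ⬝ᵥ sv θ.2 := by
      rw [smul_dotProduct, smul_eq_mul]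
      set X := (Bᵀ *ᵥ sv θ.1) ⬝ᵥ sv θ.2
      set F := frobSq B
      have e : -(F / (2 * α ^ 2 * n)) + 1 / (α * n) * X
        = (2 * α * X - F) / (2 * α ^ 2 * n) := by field_simp; ring
      rw [e, le_div_iff₀ (by positivity)]
      nlinarith
    have := Real.exp_le_exp.2 this
    linarith
  · have : 0 ≤ Real.exp (-(frobSq B / (2 * α ^ 2 * n))) *
        Real.exp (((1 / (α * n)) • (Bᵀ *ᵥ sv θ.1)) ⬝ᵥ sv θ.2) := by positivity
    rw [mul_zero, Real.exp_zero]
    linarith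

lemma transpose_mulVec_sv {n : ℕ} (B : Matrix (Fin n) (Fin n) ℝ) (b : Fin n → Bool) :
    (Bᵀ *ᵥ sv b) ⬝ᵥ (Bᵀ *ᵥ sv b) ≤ n * frobSq B := by
  rw [dot_self_eq, frobSq, Finset.sum_comm, Finset.mul_sum]
  refine Finset.sum_le_sum fun j _ => ?_
  have := Finset.sum_mul_sq_le_sq_mul_sq Finset.univ (fun i => B i j) (sv b)
  rw [← dot_self_eq (sv b), sv_dot] at this
  rw [mul_comm]
  exact this

lemma base_bound {n : ℕ} (hn : 0 < n) (α : ℝ) (hα : 0 < α) (B : Matrix (Fin n) (Fin n) ℝ)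
    (w : (Fin n → Bool) × (Fin n → Bool) → ℝ) (hw : ∀ θ, 0 < w θ) :
    ∑ θ, w θ * (if frobSq (B - spike α θ) ≤ α ^ 2 * n ^ 2 / 2 then (1 : ℝ) else 0)
      ≤ 4 / n * ent w + 4 / n * ∑ θ, w θ := by
  have hn' : (0 : ℝ) < n := by exact_mod_cast hn
  have g := gibbs w (fun θ => n / 4 *
    (if frobSq (B - spike α θ) ≤ α ^ 2 * n ^ 2 / 2 then (1 : ℝ) else 0)) hw
  have hc : ((Fintype.card ((Fin n → Bool) × (Fin n → Bool)) : ℕ) : ℝ) = 2 ^ n * 2 ^ n := by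
    simp
  rw [hc] at g
  have hW : 0 ≤ ∑ θ, w θ := Finset.sum_nonneg fun θ _ => (hw θ).le
  set Z := ∑ θ, Real.exp (n / 4 *
    (if frobSq (B - spike α θ) ≤ α ^ 2 * n ^ 2 / 2 then (1 : ℝ) else 0)) with hZ
  have hZ0 : 0 < Z := Finset.sum_pos (fun θ _ => Real.exp_pos _) Finset.univ_nonempty
  have hZle : Z ≤ 2 * (2 ^ n * 2 ^ n) := by
    refine (Finset.sum_le_sum fun θ _ => base_indicator hn α hα B θ).trans ?_
    rw [Finset.sum_add_distrib, ← Finset.mul_sum]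
    have h1 : ∀ b₁ ∈ (Finset.univ : Finset (Fin n → Bool)), ∑ b₂ : Fin n → Bool,
        Real.exp (((1 / (α * n)) • (Bᵀ *ᵥ sv b₁)) ⬝ᵥ sv b₂)
          ≤ 2 ^ n * Real.exp (frobSq B / (2 * α ^ 2 * n)) := by
      intro b₁ _
      refine (rad_mgf _).trans (mul_le_mul_of_nonneg_left (Real.exp_le_exp.2 ?_) (by positivity))
      rw [smul_dotProduct, dotProduct_smul, smul_eq_mul, smul_eq_mul]
      have := transpose_mulVec_sv B b₁
      calc _ ≤ 1 / (α * n) * (1 / (α * n) * (n * frobSq B)) / 2 := by gcongr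
        _ = _ := by field_simp
    have h2 := mul_le_mul_of_nonneg_left (Finset.sum_le_sum h1)
      (Real.exp_pos (-(frobSq B / (2 * α ^ 2 * n)))).le
    have e : Real.exp (-(frobSq B / (2 * α ^ 2 * n))) *
        ∑ b₁ : Fin n → Bool, 2 ^ n * Real.exp (frobSq B / (2 * α ^ 2 * n)) = 2 ^ n * 2 ^ n := by
      rw [Finset.sum_const, Real.exp_neg]
      simp
      field_simp
    rw [e] at h2
    have h3 : ∑ θ : (Fin n → Bool) × (Fin n → Bool), (1 : ℝ) = 2 ^ n * 2 ^ n := by simp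
    rw [h3, Fintype.sum_prod_type]
    simp only
    linarith
  have hl : Real.log (Z / (2 ^ n * 2 ^ n)) ≤ 1 := by
    rw [Real.log_le_iff_le_exp (by positivity), div_le_iff₀ (by positivity)]
    refine hZle.trans (mul_le_mul_of_nonneg_right ?_ (by positivity))
    have := Real.add_one_le_exp (1 : ℝ)
    linarith
  have g2 := g.trans (add_le_add_right (mul_le_mul_of_nonneg_left hl hW) (ent w))
  have e : ∑ θ, w θ * (if frobSq (B - spike α θ) ≤ α ^ 2 * n ^ 2 / 2 then (1 : ℝ) else 0)
      = 4 / n * ∑ θ, w θ * (n / 4 *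
    (if frobSq (B - spike α θ) ≤ α ^ 2 * n ^ 2 / 2 then (1 : ℝ) else 0)) := by
    rw [Finset.mul_sum]
    refine Finset.sum_congr rfl fun θ _ => ?_
    field_simp
  rw [e]
  refine (mul_le_mul_of_nonneg_left g2 (by positivity)).trans_eq ?_
  ring

/-! ### Norms of a Gaussian matrix -/

lemma exists_net (n : ℕ) : ∃ T : Finset (EuclideanSpace ℝ (Fin n)), T.card ≤ 5 ^ n ∧
    (∀ x ∈ T, ‖x‖ ≤ 1) ∧ ∀ x : EuclideanSpace ℝ (Fin n), ‖x‖ ≤ 1 → ∃ y ∈ T, ‖x - y‖ ≤ 1 / 2 := by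
  let P : Finset (EuclideanSpace ℝ (Fin n)) → Prop := fun s =>
    (∀ c ∈ s, ‖c‖ ≤ 2) ∧ ∀ c ∈ s, ∀ d ∈ s, c ≠ d → 1 ≤ ‖c - d‖
  have hcard : ∀ s, P s → s.card ≤ 5 ^ n := by
    intro s hs
    simpa using Besicovitch.card_le_of_separated s hs.1 hs.2
  let K : Set ℕ := {c | ∃ s, P s ∧ s.card = c}
  have hK : sSup K ∈ K := Nat.sSup_mem ⟨0, ∅, by simp [P], by simp⟩
    ⟨5 ^ n, by rintro c ⟨s, hs, rfl⟩; exact hcard s hs⟩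
  obtain ⟨s, hs, hsK⟩ := hK
  -- by maximality of `s`, every point of the ball of radius 2 is within 1 of `s`
  have hmax : ∀ x : EuclideanSpace ℝ (Fin n), ‖x‖ ≤ 2 → ∃ y ∈ s, ‖x - y‖ ≤ 1 := by
    intro x hx
    by_contra! hcon
    have hxs : x ∉ s := fun h => by have := hcon x h; simp at this; linarith
    have hP : P (insert x s) := by
      refine ⟨fun c hc => ?_, fun c hc d hd hcd => ?_⟩
      · rcases Finset.mem_insert.1 hc with rfl | hc
        exacts [hx, hs.1 c hc]
      · rcases Finset.mem_insert.1 hc with rfl | hc' <;>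
          rcases Finset.mem_insert.1 hd with rfl | hd'
        · exact absurd rfl hcd
        · exact (hcon d hd').le
        · rw [norm_sub_rev]; exact (hcon c hc').le
        · exact hs.2 c hc' d hd' hcd
    have : (insert x s).card ≤ sSup K :=
      le_csSup ⟨5 ^ n, by rintro c ⟨s, hs, rfl⟩; exact hcard s hs⟩ ⟨_, hP, rfl⟩
    rw [Finset.card_insert_of_notMem hxs] at this
    omega
  refine ⟨s.image fun y => (1 / 2 : ℝ) • y, Finset.card_image_le.trans (hcard s hs), ?_, ?_⟩
  · intro x hx
    obtain ⟨y, hy, rfl⟩ := Finset.mem_image.1 hx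
    have := hs.1 y hy
    rw [norm_smul]
    norm_num
    linarith
  · intro x hx
    obtain ⟨y, hy, hxy⟩ := hmax ((2 : ℝ) • x) (by rw [norm_smul]; norm_num; linarith)
    refine ⟨_, Finset.mem_image_of_mem _ hy, ?_⟩
    have : x - (1 / 2 : ℝ) • y = (1 / 2 : ℝ) • ((2 : ℝ) • x - y) := by
      rw [smul_sub, smul_smul]; norm_num
    rw [this, norm_smul]
    norm_num
    linarith

/-- Discretised operator norm bound. -/
lemma net_opNorm {n : ℕ} (T : Finset (EuclideanSpace ℝ (Fin n)))
    (hT : ∀ x : EuclideanSpace ℝ (Fin n), ‖x‖ ≤ 1 → ∃ y ∈ T, ‖x - y‖ ≤ 1 / 2)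
    (L : EuclideanSpace ℝ (Fin n) →L[ℝ] EuclideanSpace ℝ (Fin n)) (τ : ℝ) (hτ : 0 ≤ τ)
    (h : ∀ x ∈ T, ∀ y ∈ T, inner ℝ y (L x) ≤ τ) : ‖L‖ ≤ 4 * τ := by
  have h1 : ∀ x ∈ T, ‖L x‖ ≤ 2 * τ := by
    intro x hx
    by_cases h0 : ‖L x‖ = 0
    · rw [h0]; positivity
    have hpos : 0 < ‖L x‖ := lt_of_le_of_ne (norm_nonneg _) (Ne.symm h0)
    set z := (‖L x‖)⁻¹ • L x with hz
    have hz1 : ‖z‖ = 1 := by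
      rw [hz, norm_smul, norm_inv, norm_norm, inv_mul_cancel₀ h0]
    obtain ⟨y, hy, hzy⟩ := hT z hz1.le
    have e : inner ℝ z (L x) = ‖L x‖ := by
      rw [hz, real_inner_smul_left, real_inner_self_eq_norm_sq]
      field_simp
    have e2 : inner ℝ z (L x) = inner ℝ y (L x) + inner ℝ (z - y) (L x) := by
      rw [← inner_add_left]; simp
    have b := real_inner_le_norm (z - y) (L x)
    have := h x hx y hy
    nlinarith [mul_le_mul_of_nonneg_right hzy hpos.le]
  have h2 : ‖L‖ ≤ 2 * τ + ‖L‖ / 2 := by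
    refine ContinuousLinearMap.opNorm_le_of_unit_norm (by positivity) fun x hx => ?_
    obtain ⟨y, hy, hxy⟩ := hT x hx.le
    have e : L x = L y + L (x - y) := by rw [← map_add]; simp
    have b := L.le_opNorm (x - y)
    have := mul_le_mul_of_nonneg_left hxy (norm_nonneg L)
    calc ‖L x‖ ≤ ‖L y‖ + ‖L (x - y)‖ := by rw [e]; exact norm_add_le _ _
      _ ≤ _ := by have := h1 y hy; linarith
  linarith

/-- The matrix whose flattening is `g`. -/
def unvec {n : ℕ} (g : Fin (n * n) → ℝ) : Matrix (Fin n) (Fin n) ℝ :=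
  Matrix.of fun i j => g (finProdFinEquiv (i, j))

lemma vec_unvec {n : ℕ} (g : Fin (n * n) → ℝ) : _root_.vec n (unvec g) = g := by
  ext i
  simp only [_root_.vec, unvec, Matrix.of_apply, Prod.mk.eta, Equiv.apply_symm_apply]

lemma frobSq_unvec {n : ℕ} (g : Fin (n * n) → ℝ) : frobSq (unvec g) = ∑ i, g i ^ 2 := by
  rw [sum_fin_mul]; rfl

lemma tensor_dot_unvec {n : ℕ} (y x : Fin n → ℝ) (g : Fin (n * n) → ℝ) :
    tensor y x ⬝ᵥ g = y ⬝ᵥ (unvec g *ᵥ x) := by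
  rw [dotProduct, sum_fin_mul]
  simp only [tensor_apply, dotProduct, Matrix.mulVec, unvec, Matrix.of_apply]
  refine Finset.sum_congr rfl fun a _ => ?_
  rw [Finset.mul_sum]
  exact Finset.sum_congr rfl fun b _ => by ring

lemma gm_tail {ι : Type*} [Fintype ι] (m : ι → ℝ) (hm : m ⬝ᵥ m ≤ 1) (τ : ℝ) (hτ : 0 ≤ τ) :
    (gm ι).real {g | τ < m ⬝ᵥ g} ≤ Real.exp (-(τ ^ 2 / 2)) := by
  obtain ⟨hi, h1⟩ := gm_lik_aff (τ • m) 0 1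
  simp only [zero_mul, zero_add, mul_one] at hi h1
  have hM := mul_meas_ge_le_integral_of_nonneg (μ := gm ι)
    (Filter.Eventually.of_forall fun g => (lik_pos (τ • m) g).le) hi (Real.exp (τ ^ 2 / 2))
  rw [h1] at hM
  have hsub : {g | τ < m ⬝ᵥ g} ⊆ {g | Real.exp (τ ^ 2 / 2) ≤ lik (τ • m) g} := by
    intro g hg
    simp only [Set.mem_ofPred_eq] at hg ⊢
    rw [lik]
    refine Real.exp_le_exp.2 ?_
    simp only [smul_dotProduct, dotProduct_smul, smul_eq_mul]
    nlinarith [mul_le_mul_of_nonneg_left hg.le hτ, mul_le_mul_of_nonneg_left hm (sq_nonneg τ)]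
  have := measureReal_mono (μ := gm ι) hsub
  rw [Real.exp_neg, ← one_div, le_div_iff₀' (Real.exp_pos _)]
  exact (mul_le_mul_of_nonneg_left this (Real.exp_pos _).le).trans hM

lemma gm_second_moment {ι : Type*} [Fintype ι] :
    Integrable (fun g : ι → ℝ => ∑ i, g i ^ 2) (gm ι) ∧
    ∫ g : ι → ℝ, ∑ i, g i ^ 2 ∂(gm ι) = Fintype.card ι := by
  have h : Integrable (fun x : ℝ => x ^ 2) (gaussianReal 0 1) :=
    (memLp_id_gaussianReal (μ := 0) (v := 1) 2).integrable_sq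
  have h2 : ∫ x : ℝ, x ^ 2 ∂(gaussianReal 0 1) = 1 := by
    have := variance_id_gaussianReal (μ := 0) (v := 1)
    rw [variance_of_integral_eq_zero (X := id) aemeasurable_id
      (by simp)] at this
    simpa using this
  have hi : ∀ i : ι, Integrable (fun g : ι → ℝ => g i ^ 2) (gm ι) := fun i =>
    integrable_comp_eval (μ := fun _ : ι => gaussianReal 0 1) (i := i) h
  refine ⟨integrable_finsetSum _ fun i _ => hi i, ?_⟩
  rw [integral_finsetSum _ fun i _ => hi i]
  have : ∀ i : ι, ∫ g : ι → ℝ, g i ^ 2 ∂(gm ι) = 1 := fun i => by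
    have := integral_comp_eval (μ := fun _ : ι => gaussianReal 0 1) (i := i)
      (f := fun x : ℝ => x ^ 2) (by fun_prop)
    rw [this, h2]
  simp [this]

/-- With probability `9/10`, a standard Gaussian matrix has operator norm at most `16 √n` and
squared Frobenius norm at most `20 n²`. -/
lemma good_set {n : ℕ} (hn : 0 < n) : ∃ S : Set (Fin (n * n) → ℝ), MeasurableSet S ∧
    9 / 10 ≤ (gm (Fin (n * n))).real S ∧ ∀ g ∈ S,
      (∀ x : Fin n → ℝ, sqNorm (unvec g *ᵥ x) ≤ 256 * n * sqNorm x) ∧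
      frobSq (unvec g) ≤ 20 * n ^ 2 := by
  have hn' : (0 : ℝ) < n := by exact_mod_cast hn
  obtain ⟨T, hTc, hT1, hT⟩ := exists_net n
  set τ : ℝ := 4 * √n with hτ
  have hτ0 : 0 ≤ τ := by positivity
  have hτ2 : τ ^ 2 = 16 * n := by
    rw [hτ, mul_pow, Real.sq_sqrt hn'.le]; norm_num
  let bad1 : EuclideanSpace ℝ (Fin n) → EuclideanSpace ℝ (Fin n) → Set (Fin (n * n) → ℝ) :=
    fun x y => {g | τ < tensor y.ofLp x.ofLp ⬝ᵥ g}
  let bad2 : Set (Fin (n * n) → ℝ) := {g | 20 * (n : ℝ) ^ 2 ≤ ∑ i, g i ^ 2}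
  let bad : Set (Fin (n * n) → ℝ) := (⋃ p ∈ T ×ˢ T, bad1 p.1 p.2) ∪ bad2
  have m1 : ∀ x y, MeasurableSet (bad1 x y) := fun x y =>
    measurableSet_lt measurable_const (by unfold dotProduct; fun_prop)
  have m2 : MeasurableSet bad2 := measurableSet_le measurable_const (by fun_prop)
  have mb : MeasurableSet bad :=
    (Finset.measurableSet_biUnion _ fun p _ => m1 p.1 p.2).union m2
  have hsq : ∀ x : EuclideanSpace ℝ (Fin n), x.ofLp ⬝ᵥ x.ofLp = ‖x‖ ^ 2 := by
    intro x
    rw [EuclideanSpace.real_norm_sq_eq, dot_self_eq]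
  have p1 : ∀ p ∈ T ×ˢ T, (gm (Fin (n * n))).real (bad1 p.1 p.2) ≤ Real.exp (-(8 * n)) := by
    intro p hp
    obtain ⟨hx, hy⟩ := Finset.mem_product.1 hp
    have hle : tensor p.2.ofLp p.1.ofLp ⬝ᵥ tensor p.2.ofLp p.1.ofLp ≤ 1 := by
      rw [tensor_dot, hsq, hsq]
      have a := hT1 _ hx
      have b := hT1 _ hy
      have a' : ‖p.1‖ ^ 2 ≤ 1 := by nlinarith [norm_nonneg p.1]
      have b' : ‖p.2‖ ^ 2 ≤ 1 := by nlinarith [norm_nonneg p.2]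
      exact mul_le_one₀ b' (sq_nonneg _) a'
    have := gm_tail _ hle τ hτ0
    rw [hτ2] at this
    refine this.trans_eq ?_
    congr 1
    ring
  have q1 : (gm (Fin (n * n))).real (⋃ p ∈ T ×ˢ T, bad1 p.1 p.2) ≤ 1 / 20 := by
    refine (measureReal_biUnion_finset_le _ _).trans ((Finset.sum_le_sum p1).trans ?_)
    rw [Finset.sum_const, Finset.card_product, nsmul_eq_mul]
    have h1 : ((T.card * T.card : ℕ) : ℝ) ≤ 25 ^ n := by
      have : T.card * T.card ≤ 5 ^ n * 5 ^ n := Nat.mul_le_mul hTc hTc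
      rw [← mul_pow] at this
      exact_mod_cast this
    have h2 : Real.exp (-(8 * n)) = Real.exp (-8) ^ n := by
      rw [← Real.exp_nat_mul]; congr 1; ring
    have h3 : Real.exp (-8) ≤ 1 / 500 := by
      rw [Real.exp_neg, ← one_div]
      refine one_div_le_one_div_of_le (by norm_num) ?_
      have h := Real.exp_one_gt_d9
      have e : Real.exp 8 = Real.exp 1 ^ 8 := by rw [← Real.exp_nat_mul]; norm_num
      rw [e]
      calc (500 : ℝ) ≤ 2.7 ^ 8 := by norm_num
        _ ≤ _ := pow_le_pow_left₀ (by norm_num) (by linarith) 8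
    calc ((T.card * T.card : ℕ) : ℝ) * Real.exp (-(8 * n))
        ≤ 25 ^ n * (1 / 500) ^ n := by
          rw [h2]
          exact mul_le_mul h1 (pow_le_pow_left₀ (Real.exp_pos _).le h3 n) (by positivity)
            (by positivity)
      _ = (1 / 20) ^ n := by rw [← mul_pow]; norm_num
      _ ≤ 1 / 20 := pow_le_of_le_one (by norm_num) (by norm_num) hn.ne'
  have q2 : (gm (Fin (n * n))).real bad2 ≤ 1 / 20 := by
    obtain ⟨hi, he⟩ := gm_second_moment (ι := Fin (n * n))
    have hM := mul_meas_ge_le_integral_of_nonneg (μ := gm (Fin (n * n)))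
      (Filter.Eventually.of_forall fun g => Finset.sum_nonneg fun i _ => sq_nonneg (g i)) hi
      (20 * (n : ℝ) ^ 2)
    rw [he, Fintype.card_fin] at hM
    push_cast at hM
    have hn2 : (0 : ℝ) < (n : ℝ) ^ 2 := by positivity
    change 20 * (n : ℝ) ^ 2 * (gm (Fin (n * n))).real bad2 ≤ n * n at hM
    nlinarith
  refine ⟨badᶜ, mb.compl, ?_, fun g hg => ?_⟩
  · rw [probReal_compl_eq_one_sub mb]
    have := measureReal_union_le (μ := gm (Fin (n * n))) (⋃ p ∈ T ×ˢ T, bad1 p.1 p.2) bad2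
    change (gm (Fin (n * n))).real bad ≤ _ at this
    linarith
  · have hg1 : ∀ x ∈ T, ∀ y ∈ T, tensor y.ofLp x.ofLp ⬝ᵥ g ≤ τ := by
      intro x hx y hy
      by_contra! hcon
      exact hg (Or.inl (Set.mem_biUnion (x := (x, y)) (Finset.mem_product.2 ⟨hx, hy⟩) hcon))
    have hg2 : ∑ i, g i ^ 2 ≤ 20 * (n : ℝ) ^ 2 := by
      by_contra! hcon
      exact hg (Or.inr hcon.le)
    refine ⟨fun x => ?_, by rw [frobSq_unvec]; exact hg2⟩
    set L := Matrix.toEuclideanCLM (n := Fin n) (𝕜 := ℝ) (unvec g) with hL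
    have hLn := net_opNorm T hT L τ hτ0 (by
      intro x hx y hy
      have h := hg1 x hx y hy
      rw [tensor_dot_unvec] at h
      refine le_of_eq_of_le ?_ h
      rw [EuclideanSpace.inner_eq_star_dotProduct, dotProduct_comm]
      simp [hL])
    have hle := L.le_opNorm (WithLp.toLp 2 x)
    have h2 : ‖L (WithLp.toLp 2 x)‖ ≤ 4 * τ * ‖WithLp.toLp 2 x‖ :=
      hle.trans (mul_le_mul_of_nonneg_right hLn (norm_nonneg _))
    have h3 := pow_le_pow_left₀ (norm_nonneg _) h2 2
    rw [mul_pow, mul_pow, hτ2, EuclideanSpace.real_norm_sq_eq, EuclideanSpace.real_norm_sq_eq] at h3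
    simp only [hL, Matrix.ofLp_toEuclideanCLM] at h3
    refine h3.trans_eq ?_
    rw [sqNorm]
    ring

/-! ### Spiked matrices and their rank-one approximations -/

lemma rank_le_one_outer {n : ℕ} (M : Matrix (Fin n) (Fin n) ℝ) (h : M.rank ≤ 1) :
    ∃ x y : Fin n → ℝ, ∀ i j, M i j = x i * y j := by
  rw [Matrix.rank] at h
  obtain ⟨v, hv⟩ := finrank_le_one_iff.1 h
  have : ∀ j, ∃ c : ℝ, c • (v : Fin n → ℝ) = M *ᵥ Pi.single j 1 := by
    intro j
    obtain ⟨c, hc⟩ := hv ⟨M *ᵥ Pi.single j 1, ⟨Pi.single j 1, rfl⟩⟩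
    exact ⟨c, by simpa using congrArg Subtype.val hc⟩
  choose y hy using this
  refine ⟨v, y, fun i j => ?_⟩
  have := congrFun (hy j) i
  simp at this
  rw [← this]; ring

lemma rank_le_zero_eq {n : ℕ} (M : Matrix (Fin n) (Fin n) ℝ) (h : M.rank ≤ 0) : M = 0 := by
  rw [Matrix.rank, Nat.le_zero, Submodule.finrank_eq_zero, LinearMap.range_eq_bot] at h
  ext i j
  have := congrFun (congrArg (fun f => f (Pi.single j 1)) h) i
  simpa using this

lemma sqNorm_nonneg {ι : Type*} [Fintype ι] (x : ι → ℝ) : 0 ≤ sqNorm x :=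
  Finset.sum_nonneg fun _ _ => sq_nonneg _

lemma frobSq_nonneg {n : ℕ} (A : Matrix (Fin n) (Fin n) ℝ) : 0 ≤ frobSq A :=
  Finset.sum_nonneg fun _ _ => Finset.sum_nonneg fun _ _ => sq_nonneg _

lemma sqNorm_mulVec_le {n : ℕ} (A : Matrix (Fin n) (Fin n) ℝ) (x : Fin n → ℝ) :
    sqNorm (A *ᵥ x) ≤ frobSq A * sqNorm x := by
  rw [sqNorm, frobSq, Finset.sum_mul]
  exact Finset.sum_le_sum fun i _ => Finset.sum_mul_sq_le_sq_mul_sq Finset.univ (A i) x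

lemma specNorm_bdd {n : ℕ} (A : Matrix (Fin n) (Fin n) ℝ) :
    BddAbove ((fun x : Fin n → ℝ => Real.sqrt (sqNorm (A.mulVec x))) '' {x | sqNorm x ≤ 1}) := by
  refine ⟨√(frobSq A), ?_⟩
  rintro _ ⟨x, hx, rfl⟩
  refine Real.sqrt_le_sqrt ((sqNorm_mulVec_le A x).trans ?_)
  exact mul_le_of_le_one_right (frobSq_nonneg A) hx

lemma le_specNorm {n : ℕ} (A : Matrix (Fin n) (Fin n) ℝ) (x : Fin n → ℝ) (hx : sqNorm x ≤ 1) :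
    √(sqNorm (A *ᵥ x)) ≤ specNorm A := le_csSup (specNorm_bdd A) ⟨x, hx, rfl⟩

lemma specNorm_nonneg {n : ℕ} (A : Matrix (Fin n) (Fin n) ℝ) : 0 ≤ specNorm A :=
  (Real.sqrt_nonneg _).trans (le_specNorm A 0 (by simp [sqNorm]))

lemma specNorm_le {n : ℕ} (A : Matrix (Fin n) (Fin n) ℝ) (c : ℝ)
    (h : ∀ x, sqNorm x ≤ 1 → √(sqNorm (A *ᵥ x)) ≤ c) : specNorm A ≤ c := by
  refine csSup_le ⟨_, 0, by simp [sqNorm], rfl⟩ ?_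
  rintro _ ⟨x, hx, rfl⟩
  exact h x hx

lemma spike_rank {n : ℕ} (α : ℝ) (θ : (Fin n → Bool) × (Fin n → Bool)) :
    (spike α θ).rank ≤ 1 := by
  have : spike α θ = Matrix.vecMulVec (α • sv θ.1) (sv θ.2) := by
    ext i j; simp [spike, Matrix.vecMulVec, mul_assoc]
  rw [this]
  exact Matrix.rank_vecMulVec_le _ _

lemma frobSq_spike {n : ℕ} (α : ℝ) (θ : (Fin n → Bool) × (Fin n → Bool)) :
    frobSq (spike α θ) = α ^ 2 * n ^ 2 := by
  simp only [frobSq, spike, Matrix.of_apply, mul_pow, sv_sq]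
  simp
  ring

/-- The spiked matrix has a singular value gap once the noise has operator norm `16 √n`. -/
lemma spike_gap {n : ℕ} (hn : 0 < n) (α : ℝ) (hα : α ^ 2 * n = 512 ^ 2)
    (θ : (Fin n → Bool) × (Fin n → Bool)) (H : Matrix (Fin n) (Fin n) ℝ)
    (hH : ∀ x : Fin n → ℝ, sqNorm (H *ᵥ x) ≤ 256 * n * sqNorm x) :
    2 * singVal (spike α θ + H) 2 ≤ singVal (spike α θ + H) 1 := by
  have hn' : (0 : ℝ) < n := by exact_mod_cast hn
  have h16 : (16 * √n) ^ 2 = 256 * (n : ℝ) := by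
    rw [mul_pow, Real.sq_sqrt hn'.le]; norm_num
  have h32 : (32 * √n) ^ 2 = 1024 * (n : ℝ) := by
    rw [mul_pow, Real.sq_sqrt hn'.le]; norm_num
  have h2 : singVal (spike α θ + H) 2 ≤ 16 * √n := by
    have : singVal (spike α θ + H) 2 ≤ specNorm (spike α θ + H - spike α θ) := by
      refine csInf_le ⟨0, ?_⟩ ⟨spike α θ, by simpa using spike_rank α θ, rfl⟩
      rintro _ ⟨X, -, rfl⟩
      exact specNorm_nonneg _
    rw [add_sub_cancel_left] at this
    refine this.trans (specNorm_le _ _ fun x hx => ?_)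
    rw [Real.sqrt_le_left (by positivity), h16]
    exact (hH x).trans (mul_le_of_le_one_right (by positivity) hx)
  have h1 : 32 * √n ≤ singVal (spike α θ + H) 1 := by
    refine le_csInf ⟨_, 0, by simp, rfl⟩ ?_
    rintro _ ⟨X, hX, rfl⟩
    rw [rank_le_zero_eq X (by simpa using hX), sub_zero]
    -- the unit vector `v / √n` is nearly a right singular vector
    set x : Fin n → ℝ := (√n)⁻¹ • sv θ.2 with hx
    have hx1 : sqNorm x = 1 := by
      simp only [sqNorm, hx, Pi.smul_apply, smul_eq_mul, mul_pow, sv_sq, inv_pow,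
        Real.sq_sqrt hn'.le]
      simp [hn'.ne']
    refine le_trans ?_ (le_specNorm _ x hx1.le)
    refine Real.le_sqrt_of_sq_le ?_
    rw [h32]
    have e : ∀ i, (spike α θ *ᵥ x) i = α * √n * sv θ.1 i := by
      intro i
      simp only [Matrix.mulVec, dotProduct, spike, Matrix.of_apply, hx, Pi.smul_apply, smul_eq_mul]
      have : ∀ j, α * (sv θ.1 i * sv θ.2 j) * ((√n)⁻¹ * sv θ.2 j)
          = α * sv θ.1 i * (√n)⁻¹ := by
        intro j
        have := sv_sq θ.2 j
        calc _ = α * sv θ.1 i * (√n)⁻¹ * sv θ.2 j ^ 2 := by ring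
          _ = _ := by rw [this, mul_one]
      simp only [this]
      rw [Finset.sum_const, Finset.card_univ, Fintype.card_fin, nsmul_eq_mul]
      have hs : (0 : ℝ) < √n := Real.sqrt_pos.2 hn'
      field_simp
      rw [Real.sq_sqrt hn'.le]
      ring
    have e1 : sqNorm (spike α θ *ᵥ x) = 512 ^ 2 * n := by
      simp only [sqNorm, e, mul_pow, sv_sq, Real.sq_sqrt hn'.le]
      rw [hα]
      simp
      ring
    have e2 := hH x
    rw [hx1] at e2
    have e3 : sqNorm (spike α θ *ᵥ x) / 2 - sqNorm (H *ᵥ x)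
        ≤ sqNorm ((spike α θ + H) *ᵥ x) := by
      rw [Matrix.add_mulVec, sqNorm, sqNorm, sqNorm, Finset.sum_div, ← Finset.sum_sub_distrib]
      refine Finset.sum_le_sum fun i _ => ?_
      simp only [Pi.add_apply]
      nlinarith [sq_nonneg ((spike α θ *ᵥ x) i + 2 * (H *ᵥ x) i)]
    linarith
  linarith

/-- Frobenius inner product. -/
def frobInner {n : ℕ} (A B : Matrix (Fin n) (Fin n) ℝ) : ℝ := ∑ i, ∑ j, A i j * B i j

lemma frobSq_add {n : ℕ} (A B : Matrix (Fin n) (Fin n) ℝ) :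
    frobSq (A + B) = frobSq A + 2 * frobInner A B + frobSq B := by
  simp only [frobSq, frobInner, Finset.mul_sum, ← Finset.sum_add_distrib, Matrix.add_apply]
  exact Finset.sum_congr rfl fun i _ => Finset.sum_congr rfl fun j _ => by ring

lemma frobInner_sub {n : ℕ} (A B H : Matrix (Fin n) (Fin n) ℝ) :
    frobInner (A - B) H = frobInner A H - frobInner B H := by
  simp only [frobInner, ← Finset.sum_sub_distrib, Matrix.sub_apply, sub_mul]

/-- A rank-one matrix pairs with `H` only through the operator norm of `H`. -/
lemma frobInner_rank_one {n : ℕ} (M H : Matrix (Fin n) (Fin n) ℝ) (hM : M.rank ≤ 1) (s : ℝ)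
    (hH : ∀ x : Fin n → ℝ, sqNorm (H *ᵥ x) ≤ s * sqNorm x) :
    frobInner M H ^ 2 ≤ s * frobSq M := by
  obtain ⟨x, y, hxy⟩ := rank_le_one_outer M hM
  have e1 : frobInner M H = ∑ i, x i * (H *ᵥ y) i := by
    simp only [frobInner, hxy, Matrix.mulVec, dotProduct, Finset.mul_sum]
    exact Finset.sum_congr rfl fun i _ => Finset.sum_congr rfl fun j _ => by ring
  have e2 : frobSq M = sqNorm x * sqNorm y := by
    simp only [frobSq, hxy, sqNorm, mul_pow]
    rw [Finset.sum_mul_sum]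
  rw [e1, e2]
  calc _ ≤ sqNorm x * sqNorm (H *ᵥ y) := Finset.sum_mul_sq_le_sq_mul_sq Finset.univ x _
    _ ≤ sqNorm x * (s * sqNorm y) := mul_le_mul_of_nonneg_left (hH y) (sqNorm_nonneg x)
    _ = _ := by ring

/-- A near-optimal rank-one approximation of the spiked matrix is close to the spike. -/
lemma success_close {n : ℕ} (hn : 0 < n) (α : ℝ) (hα : α ^ 2 * n = 512 ^ 2)
    (θ : (Fin n → Bool) × (Fin n → Bool)) (H B : Matrix (Fin n) (Fin n) ℝ)
    (hH : ∀ x : Fin n → ℝ, sqNorm (H *ᵥ x) ≤ 256 * n * sqNorm x)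
    (hF : frobSq H ≤ 20 * n ^ 2) (hB : B.rank ≤ 1)
    (hs : frobSq (spike α θ + H - B) ≤ (1 + 1 / (n : ℝ)) *
      sInf {c' | ∃ X : Matrix (Fin n) (Fin n) ℝ, X.rank ≤ 1 ∧ c' = frobSq (spike α θ + H - X)}) :
    frobSq (B - spike α θ) ≤ α ^ 2 * n ^ 2 / 2 := by
  have hn' : (0 : ℝ) < n := by exact_mod_cast hn
  have hinf : sInf {c' | ∃ X : Matrix (Fin n) (Fin n) ℝ, X.rank ≤ 1 ∧
      c' = frobSq (spike α θ + H - X)} ≤ frobSq H := by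
    refine csInf_le ⟨0, ?_⟩ ⟨spike α θ, spike_rank α θ, by rw [add_sub_cancel_left]⟩
    rintro _ ⟨X, -, rfl⟩
    exact frobSq_nonneg _
  have h1 : frobSq (spike α θ + H - B) ≤ (1 + 1 / (n : ℝ)) * frobSq H :=
    hs.trans (mul_le_mul_of_nonneg_left hinf (by positivity))
  have h2 : 1 / (n : ℝ) * frobSq H ≤ 20 * n := by
    rw [one_div, inv_mul_le_iff₀ hn']
    linarith
  have e : spike α θ + H - B = (spike α θ - B) + H := by abel
  rw [e, frobSq_add, frobInner_sub] at h1
  have hd : frobSq (B - spike α θ) = frobSq (spike α θ - B) := by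
    simp only [frobSq, Matrix.sub_apply]
    exact Finset.sum_congr rfl fun i _ => Finset.sum_congr rfl fun j _ => by ring
  rw [hd]
  have hP : frobSq (spike α θ) = 512 ^ 2 * n := by
    rw [frobSq_spike, sq (n : ℝ), ← mul_assoc, hα]
  have hPn : α ^ 2 * n ^ 2 = 512 ^ 2 * n := by rw [sq (n : ℝ), ← mul_assoc, hα]
  rw [hPn]
  have i1 := frobInner_rank_one (spike α θ) H (spike_rank α θ) _ hH
  have i2 := frobInner_rank_one B H hB _ hH
  have hBle : frobSq B ≤ 2 * frobSq (spike α θ) + 2 * frobSq (spike α θ - B) := by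
    simp only [frobSq, Finset.mul_sum, ← Finset.sum_add_distrib, Matrix.sub_apply]
    refine Finset.sum_le_sum fun i _ => Finset.sum_le_sum fun j _ => ?_
    nlinarith [sq_nonneg (2 * spike α θ i j - B i j)]
  have j1 : |frobInner (spike α θ) H| ≤ 16 * 512 * n := by
    refine abs_le_of_sq_le_sq (i1.trans_eq ?_) (by positivity)
    rw [hP]; ring
  have j2 : 2 * frobInner B H ≤ frobSq B / 8 + 8 * (256 * n) := by
    have : (2 * frobInner B H) ^ 2 ≤ (frobSq B / 8 + 8 * (256 * n)) ^ 2 := by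
      nlinarith [sq_nonneg (frobSq B / 8 - 8 * (256 * n))]
    exact le_of_abs_le (abs_le_of_sq_le_sq this (by have := frobSq_nonneg B; positivity))
  have j1' := (abs_le.1 j1).1
  rw [hP] at hBle
  nlinarith

/-! ### The lower bound -/

/-- Success indicator: the output `B` lies within half the squared Frobenius norm of the spike. -/
def hit {n : ℕ} (α : ℝ) (θ : (Fin n → Bool) × (Fin n → Bool)) (B : Matrix (Fin n) (Fin n) ℝ) : ℝ :=
  if frobSq (B - spike α θ) ≤ α ^ 2 * n ^ 2 / 2 then 1 else 0

lemma hit_nonneg {n : ℕ} (α : ℝ) (θ : (Fin n → Bool) × (Fin n → Bool))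
    (B : Matrix (Fin n) (Fin n) ℝ) : 0 ≤ hit α θ B := by
  unfold hit; split_ifs <;> norm_num

lemma hit_le_one {n : ℕ} (α : ℝ) (θ : (Fin n → Bool) × (Fin n → Bool))
    (B : Matrix (Fin n) (Fin n) ℝ) : hit α θ B ≤ 1 := by
  unfold hit; split_ifs <;> norm_num

lemma measurable_hit {n : ℕ} {X : Type*} [MeasurableSpace X] (α : ℝ)
    (θ : (Fin n → Bool) × (Fin n → Bool)) (B : X → Matrix (Fin n) (Fin n) ℝ)
    (hB : ∀ i j, Measurable fun x => B x i j) : Measurable fun x => hit α θ (B x) := by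
  unfold hit
  refine Measurable.ite (measurableSet_le ?_ measurable_const) measurable_const measurable_const
  unfold frobSq
  simp only [Matrix.sub_apply]
  exact Finset.measurable_sum _ fun i _ => Finset.measurable_sum _ fun j _ =>
    ((hB i j).sub_const _).pow_const 2

/-- A deterministic algorithm locates a uniformly random spike with small probability. -/
lemma deterministic_upper {n k t : ℕ} (hn : 0 < n) (α : ℝ) (hα0 : 0 < α)
    (hα : α ^ 2 * n = 512 ^ 2) (Q : QueryMaps (n * n) k t) (hQ : Q.Valid)
    (o : (Fin t → Fin k → ℝ) → Matrix (Fin n) (Fin n) ℝ)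
    (ho : ∀ i j, Measurable fun r => o r i j) :
    ∑ θ, ∫ G, hit α θ (o (Q.resp (_root_.vec n (spike α θ) + G))) ∂gm (Fin (n * n))
      ≤ (4 / n + 2 * k / n ^ 2 * ((1 + 4 * 512 ^ 2) ^ t - 1)) * (2 ^ n * 2 ^ n) := by
  have hn' : (0 : ℝ) < n := by exact_mod_cast hn
  have h := round_induction (fun θ => _root_.vec n (spike α θ)) (4 * α ^ 2 * n) (2 * α ^ 2 * k)
    (4 / n) (4 / n) (by positivity) (by positivity)
    (fun M hM w hw => by
      simp only [vec_spike]
      exact query_energy hn M hM α w hw) t Q hQ (fun θ r => hit α θ (o r))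
    (fun θ => measurable_hit α θ o ho) (fun θ r => hit_nonneg _ _ _) (fun θ r => hit_le_one _ _ _)
    (fun r w hw => base_bound hn α hα0 (o r) w hw) (fun _ => 1) (fun _ => one_pos)
  have hk : 4 * α ^ 2 * n = 4 * 512 ^ 2 := by rw [mul_assoc, hα]
  have hk2 : 2 * α ^ 2 * k = 4 * 512 ^ 2 * (k / (2 * n)) := by
    rw [← hα]; field_simp; ring
  rw [ent_const_one, mul_zero, zero_add, hk, hk2] at h
  have hg : (∑ i ∈ Finset.range t, (1 + 4 * 512 ^ 2 : ℝ) ^ i) * (4 * 512 ^ 2)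
      = (1 + 4 * 512 ^ 2) ^ t - 1 := by
    have := geom_sum_mul (1 + 4 * 512 ^ 2 : ℝ) t
    rwa [add_sub_cancel_left] at this
  have h3 : ∑ θ : (Fin n → Bool) × (Fin n → Bool), (1 : ℝ) = 2 ^ n * 2 ^ n := by simp
  rw [h3] at h
  simp only [one_mul] at h
  refine h.trans_eq ?_
  rw [← hg]
  field_simp
  ring

/-- Averaging over the seed: a randomized algorithm that succeeds on all gapped inputs forces the
deterministic upper bound to be at least `1/2`. -/
lemma main_ineq {n k t : ℕ} (hn : 0 < n) (Ω : Type) [MeasurableSpace Ω] (μ : Measure Ω)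
    [IsProbabilityMeasure μ] (Qf : Ω → QueryMaps (n * n) k t)
    (out : Ω → (Fin t → Fin k → ℝ) → Matrix (Fin n) (Fin n) ℝ)
    (hQ : ∀ ω, (Qf ω).Valid)
    (hQm : ∀ (j : Fin t) (i : Fin k) (l : Fin (n * n)),
      Measurable fun p : Ω × (Fin (j : ℕ) → Fin k → ℝ) => Qf p.1 j p.2 i l)
    (hom : ∀ i j : Fin n, Measurable fun p : Ω × (Fin t → Fin k → ℝ) => out p.1 p.2 i j)
    (hsucc : ∀ A : Matrix (Fin n) (Fin n) ℝ, 2 * singVal A 2 ≤ singVal A 1 →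
      (99 / 100 : ℝ≥0∞) ≤
        μ {ω | (out ω (QueryMaps.resp (Qf ω) (_root_.vec n A))).rank ≤ 1 ∧
          frobSq (A - out ω (QueryMaps.resp (Qf ω) (_root_.vec n A)))
            ≤ (1 + 1 / (n : ℝ)) * sInf {c' | ∃ X : Matrix (Fin n) (Fin n) ℝ,
                X.rank ≤ 1 ∧ c' = frobSq (A - X)}}) :
    (1 / 2 : ℝ) ≤ 4 / n + 2 * k / n ^ 2 * ((1 + 4 * 512 ^ 2) ^ t - 1) := by
  have hn' : (0 : ℝ) < n := by exact_mod_cast hn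
  set α : ℝ := 512 / √n with hαdef
  have hs : (0 : ℝ) < √n := Real.sqrt_pos.2 hn'
  have hα0 : 0 < α := by positivity
  have hα : α ^ 2 * n = 512 ^ 2 := by
    rw [hαdef, div_pow, Real.sq_sqrt hn'.le]
    field_simp
  obtain ⟨S, hSm, hSp, hS⟩ := good_set hn
  let F : (Fin n → Bool) × (Fin n → Bool) → Ω × (Fin (n * n) → ℝ) → ℝ := fun θ x =>
    hit α θ (out x.1 ((Qf x.1).resp (_root_.vec n (spike α θ) + x.2)))
  have hFm : ∀ θ, Measurable (F θ) := by
    intro θ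
    refine measurable_hit α θ _ fun i j => ?_
    have hr : Measurable fun x : Ω × (Fin (n * n) → ℝ) =>
        (Qf x.1).resp (_root_.vec n (spike α θ) + x.2) := by
      refine QueryMaps.measurable_resp (fun x : Ω × (Fin (n * n) → ℝ) => Qf x.1) ?_ _
        (by fun_prop)
      intro j i l
      exact (hQm j i l).comp (f := fun p : (Ω × (Fin (n * n) → ℝ)) × (Fin (j : ℕ) → Fin k → ℝ) =>
        (p.1.1, p.2)) (by fun_prop)
    exact (hom i j).comp (measurable_fst.prodMk hr)
  have hFi : ∀ θ, Integrable (F θ) (μ.prod (gm (Fin (n * n)))) := fun θ =>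
    Integrable.of_bound (hFm θ).aestronglyMeasurable 1 (Filter.Eventually.of_forall fun x => by
      rw [Real.norm_of_nonneg (hit_nonneg _ _ _)]
      exact hit_le_one _ _ _)
  have upper : ∑ θ, ∫ ω, ∫ G, F θ (ω, G) ∂gm (Fin (n * n)) ∂μ
      ≤ (4 / n + 2 * k / n ^ 2 * ((1 + 4 * 512 ^ 2) ^ t - 1)) * (2 ^ n * 2 ^ n) := by
    rw [← integral_finsetSum _ fun θ _ => (hFi θ).integral_prod_left]
    refine (integral_mono (integrable_finsetSum _ fun θ _ => (hFi θ).integral_prod_left)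
      (integrable_const _) fun ω => deterministic_upper hn α hα0 hα (Qf ω) (hQ ω) (out ω)
        fun i j => (hom i j).comp (measurable_const.prodMk measurable_id)).trans_eq ?_
    simp
  have lower : ∀ θ, (1 / 2 : ℝ) ≤ ∫ ω, ∫ G, F θ (ω, G) ∂gm (Fin (n * n)) ∂μ := by
    intro θ
    rw [integral_integral_swap (f := fun ω G => F θ (ω, G)) (hFi θ)]
    have key : ∀ G, S.indicator (fun _ => (99 / 100 : ℝ)) G ≤ ∫ ω, F θ (ω, G) ∂μ := by
      intro G
      by_cases hG : G ∈ S
      · rw [Set.indicator_of_mem hG]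
        obtain ⟨hop, hfr⟩ := hS G hG
        set A := spike α θ + unvec G with hA
        have hvA : _root_.vec n A = _root_.vec n (spike α θ) + G := by
          conv_rhs => rw [← vec_unvec G]
          rfl
        have h1 := hsucc A (spike_gap hn α hα θ _ hop)
        rw [hvA] at h1
        have hle := h1.trans (measure_mono (t := {ω | F θ (ω, G) = 1}) (by
          rintro ω ⟨hr, hb⟩
          have := success_close hn α hα θ (unvec G) _ hop hfr hr hb
          change hit α θ _ = 1
          rw [hit, if_pos this]))
        have hmeas : MeasurableSet {ω | F θ (ω, G) = 1} :=
          ((hFm θ).comp (measurable_id.prodMk measurable_const)) (measurableSet_singleton 1)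
        have hle2 : (99 / 100 : ℝ) ≤ μ.real {ω | F θ (ω, G) = 1} := by
          have := ENNReal.toReal_mono (measure_ne_top μ _) hle
          simpa [Measure.real] using this
        refine hle2.trans ?_
        rw [← integral_indicator_one hmeas]
        refine integral_mono_of_nonneg (Filter.Eventually.of_forall fun ω =>
          Set.indicator_nonneg (fun _ _ => zero_le_one) _) ?_
          (Filter.Eventually.of_forall fun ω => ?_)
        · refine Integrable.of_bound ((hFm θ).comp
            (measurable_id.prodMk measurable_const)).aestronglyMeasurable 1
            (Filter.Eventually.of_forall fun ω => ?_)
          change ‖F θ (ω, G)‖ ≤ 1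
          rw [Real.norm_of_nonneg (hit_nonneg _ _ _)]
          exact hit_le_one _ _ _
        · by_cases hω : ω ∈ {ω | F θ (ω, G) = 1}
          · rw [Set.indicator_of_mem hω]
            exact hω.ge
          · rw [Set.indicator_of_notMem hω]
            exact hit_nonneg _ _ _
      · rw [Set.indicator_of_notMem hG]
        exact integral_nonneg fun ω => hit_nonneg _ _ _
    have h2 := integral_mono ((integrable_const _).indicator hSm)
      (hFi θ).integral_prod_right key
    rw [integral_indicator_const _ hSm, smul_eq_mul] at h2
    linarith
  have h4 : (1 / 2 : ℝ) * (2 ^ n * 2 ^ n) ≤ ∑ θ, ∫ ω, ∫ G, F θ (ω, G) ∂gm (Fin (n * n)) ∂μ := by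
    refine le_trans (le_of_eq ?_) (Finset.sum_le_sum fun θ _ => lower θ)
    simp
    ring
  exact le_of_mul_le_mul_right (h4.trans upper) (by positivity)

lemma rounds_from_ineq {n k t : ℕ} (hn : 27 ≤ n) (hnk : n ≤ k) (hkn : k ≤ n ^ 2)
    (h : (1 / 2 : ℝ) ≤ 4 / n + 2 * k / n ^ 2 * ((1 + 4 * 512 ^ 2) ^ t - 1)) :
    1 / (8 * Real.log (1 + 4 * 512 ^ 2)) * (Real.log ((n : ℝ) ^ 2 / k) / Real.log (Real.log n))
      ≤ (t : ℝ) := by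
  have hn27 : (27 : ℝ) ≤ n := by exact_mod_cast hn
  have hk0 : (0 : ℝ) < k := by exact_mod_cast (by omega : 0 < k)
  have hkn' : (k : ℝ) ≤ (n : ℝ) ^ 2 := by exact_mod_cast hkn
  have hD : 0 < Real.log (1 + 4 * 512 ^ 2) := Real.log_pos (by norm_num)
  set x : ℝ := (n : ℝ) ^ 2 / k with hx
  have hx1 : 1 ≤ x := by rwa [hx, one_le_div hk0]
  have hlogx : 0 ≤ Real.log x := Real.log_nonneg hx1
  have hll : 1 ≤ Real.log (Real.log n) := by
    have he := Real.exp_one_lt_d9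
    have h3 : (3 : ℝ) ≤ Real.log n := by
      rw [Real.le_log_iff_exp_le (by linarith)]
      have e : Real.exp 3 = Real.exp 1 ^ 3 := by rw [← Real.exp_nat_mul]; norm_num
      rw [e]
      calc _ ≤ (3 : ℝ) ^ 3 := pow_le_pow_left₀ (Real.exp_pos _).le (by linarith) 3
        _ ≤ _ := by linarith
    rw [Real.le_log_iff_exp_le (by linarith)]
    linarith
  have hpow : 1 + x / 8 ≤ (1 + 4 * 512 ^ 2 : ℝ) ^ t := by
    have h4 : (4 : ℝ) / n ≤ 1 / 4 := by
      rw [div_le_iff₀ (by linarith)]; linarith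
    have h5 : (1 / 4 : ℝ) ≤ 2 * k / n ^ 2 * ((1 + 4 * 512 ^ 2) ^ t - 1) := by linarith
    have e : (2 : ℝ) * k / n ^ 2 = 2 / x := by rw [hx]; field_simp
    rw [e, div_mul_eq_mul_div, le_div_iff₀ (by linarith)] at h5
    linarith
  have hber : x ≤ (1 + x / 8) ^ 8 := by
    have := one_add_mul_le_pow (show (-2 : ℝ) ≤ x / 8 by linarith) 8
    push_cast at this
    linarith
  have hlog : Real.log x ≤ 8 * (t * Real.log (1 + 4 * 512 ^ 2)) := by
    have h6 := Real.log_le_log (by linarith) hber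
    have h7 := Real.log_le_log (by linarith) hpow
    rw [Real.log_pow] at h6 h7
    push_cast at h6
    exact h6.trans (mul_le_mul_of_nonneg_left h7 (by norm_num))
  have h8 : Real.log x / Real.log (Real.log n) ≤ Real.log x := div_le_self hlogx hll
  rw [one_div, inv_mul_le_iff₀ (by positivity)]
  exact (h8.trans hlog).trans_eq (by ring)

/-- Round lower bound for `(1 + 1/n)`-approximate rank-one Frobenius norm low-rank
approximation on matrices with a singular value gap. -/
theorem frobenius_LRA_round_lower_bound :
    ∃ (c : ℝ) (n₀ : ℕ), 0 < c ∧
      ∀ (n k t : ℕ), n₀ ≤ n → n ≤ k → k ≤ n ^ 2 →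
      ∀ (Ω : Type) [MeasurableSpace Ω] (μ : Measure Ω) [IsProbabilityMeasure μ]
        (Qf : Ω → QueryMaps (n * n) k t)
        (out : Ω → (Fin t → Fin k → ℝ) → Matrix (Fin n) (Fin n) ℝ),
        (∀ ω, (Qf ω).Valid) →
        (∀ (j : Fin t) (i : Fin k) (l : Fin (n * n)),
            Measurable fun p : Ω × (Fin (j : ℕ) → Fin k → ℝ) => Qf p.1 j p.2 i l) →
        (∀ i j : Fin n,
            Measurable fun p : Ω × (Fin t → Fin k → ℝ) => out p.1 p.2 i j) →
        (∀ A : Matrix (Fin n) (Fin n) ℝ, 2 * singVal A 2 ≤ singVal A 1 →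
            (99 / 100 : ℝ≥0∞) ≤
              μ {ω | (out ω (QueryMaps.resp (Qf ω) (vec n A))).rank ≤ 1 ∧
                    frobSq (A - out ω (QueryMaps.resp (Qf ω) (vec n A)))
                      ≤ (1 + 1 / (n : ℝ)) * sInf {c' | ∃ X : Matrix (Fin n) (Fin n) ℝ,
                          X.rank ≤ 1 ∧ c' = frobSq (A - X)}}) →
        c * (Real.log ((n : ℝ) ^ 2 / k) / Real.log (Real.log n)) ≤ (t : ℝ) := by
  refine ⟨1 / (8 * Real.log (1 + 4 * 512 ^ 2)), 27, ?_, ?_⟩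
  · have : 0 < Real.log (1 + 4 * 512 ^ 2) := Real.log_pos (by norm_num)
    positivity
  · intro n k t hn hnk hkn Ω _ μ _ Qf out hQ hQm hom hsucc
    exact rounds_from_ineq hn hnk hkn
      (main_ineq (by omega) Ω μ Qf out hQ hQm hom hsucc)

end
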